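/- arXiv:1811.12559 — 2 statements merged into one kernel-verified Lean document; each statement's English description precedes it below -/
import Mathlib

section
/- There exists a constant C > 0 such that for any v, w ∈ ℍ and any δ > 0, the set {θ ∈ [0,π) : d_ℍ(P_{V_θ^⊥}(v), P_{V_θ^⊥}(w)) ≤ δ} is contained in a disjoint union of at most 40 intervals, each of length less than Cδ/d_ℍ(v,w). -/
open Real MeasureTheory

noncomputable section

/-- Points of the plane. -/
abbrev Pt := ℝ × ℝ
/-- Points of the Heisenberg group ℍ ≅ ℂ × ℝ ≅ ℝ² × ℝ. -/
abbrev Heis := (ℝ × ℝ) × ℝ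

/-- Wedge product on ℝ². -/
def wedge (z w : Pt) : ℝ := z.1 * w.2 - z.2 * w.1

/-- Euclidean inner product on ℝ². -/
def dotP (z w : Pt) : ℝ := z.1 * w.1 + z.2 * w.2

/-- Euclidean norm on ℝ². -/
def nrm (z : Pt) : ℝ := Real.sqrt (z.1 ^ 2 + z.2 ^ 2)

/-- The unit vector e^{iθ} = (cos θ, sin θ). -/
def eV (θ : ℝ) : Pt := (Real.cos θ, Real.sin θ)

/-- The unit vector i·e^{iθ} = (−sin θ, cos θ). -/
def ieV (θ : ℝ) : Pt := (-Real.sin θ, Real.cos θ)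

/-- Orthogonal projection onto the line V_θ spanned by e^{iθ}. -/
def projV (θ : ℝ) (z : Pt) : Pt := (dotP z (eV θ)) • eV θ

/-- Orthogonal projection onto the orthogonal complement V_θ^⊥, spanned by i·e^{iθ}. -/
def projVperp (θ : ℝ) (z : Pt) : Pt := (dotP z (ieV θ)) • ieV θ

/-- Heisenberg group law. -/
def hmul (v w : Heis) : Heis := (v.1 + w.1, v.2 + w.2 - 2 * wedge v.1 w.1)

/-- Heisenberg group inverse. -/
def hinv (v : Heis) : Heis := (-v.1, -v.2)

/-- Korányi norm ‖(z,t)‖ = (|z|⁴ + t²)^{1/4}. -/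
def Knorm (v : Heis) : ℝ := ((nrm v.1) ^ 4 + v.2 ^ 2) ^ ((1 : ℝ) / 4)

/-- Korányi distance (via the explicit second-component formula). -/
def dH (v w : Heis) : ℝ :=
  ((nrm (v.1 - w.1)) ^ 4 + (v.2 - w.2 - 2 * wedge v.1 w.1) ^ 2) ^ ((1 : ℝ) / 4)

/-- Horizontal projection P_{V_θ}. -/
def PV (θ : ℝ) (v : Heis) : Heis := (projV θ v.1, 0)

/-- Vertical projection P_{V_θ^⊥}. -/
def PVperp (θ : ℝ) (v : Heis) : Heis :=
  (projVperp θ v.1, v.2 - 2 * wedge (projV θ v.1) (projVperp θ v.1))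

theorem merge_aux : ∀ (n : ℕ) (F : Finset (ℝ × ℝ)), F.card = n → (∀ p ∈ F, p.1 ≤ p.2) →
    ∃ G : Finset (ℝ × ℝ), G.card ≤ n ∧
      (∀ p ∈ G, ∀ q ∈ G, p ≠ q → Disjoint (Set.Icc p.1 p.2) (Set.Icc q.1 q.2)) ∧
      (∀ p ∈ G, p.2 - p.1 ≤ ∑ q ∈ F, (q.2 - q.1)) ∧
      (∀ x, ∀ p ∈ F, x ∈ Set.Icc p.1 p.2 → ∃ q ∈ G, x ∈ Set.Icc q.1 q.2) := by
  intro n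
  induction n using Nat.strong_induction_on with
  | _ n ih =>
  intro F hF hle
  by_cases h : ∀ p ∈ F, ∀ q ∈ F, p ≠ q → Disjoint (Set.Icc p.1 p.2) (Set.Icc q.1 q.2)
  · refine ⟨F, hF.le, h, ?_, fun x p hp hx => ⟨p, hp, hx⟩⟩
    intro p hp
    exact Finset.single_le_sum (f := fun q : ℝ × ℝ => q.2 - q.1)
      (fun q hq => sub_nonneg.2 (hle q hq)) hp
  · push Not at h
    obtain ⟨p, hp, q, hq, hpq, hd⟩ := h
    rw [Set.not_disjoint_iff] at hd
    obtain ⟨y, hyp, hyq⟩ := hd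
    have hq' : q ∈ F.erase p := Finset.mem_erase.2 ⟨hpq.symm, hq⟩
    set E := (F.erase p).erase q with hE
    set m : ℝ × ℝ := (min p.1 q.1, max p.2 q.2) with hm
    have c1 : E.card + 1 = (F.erase p).card := Finset.card_erase_add_one hq'
    have c2 : (F.erase p).card + 1 = F.card := Finset.card_erase_add_one hp
    have s1 := Finset.add_sum_erase F (fun q : ℝ × ℝ => q.2 - q.1) hp
    have s2 := Finset.add_sum_erase (F.erase p) (fun q : ℝ × ℝ => q.2 - q.1) hq'
    have hcard : (insert m E).card ≤ E.card + 1 := Finset.card_insert_le _ _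
    have hEF : ∀ x ∈ E, x ∈ F := fun x hx => Finset.mem_of_mem_erase (Finset.mem_of_mem_erase hx)
    have hm12 : m.1 ≤ m.2 := (min_le_left _ _).trans ((hle p hp).trans (le_max_left _ _))
    have hlen : m.2 - m.1 ≤ (p.2 - p.1) + (q.2 - q.1) := by
      have := hyp.1; have := hyp.2; have := hyq.1; have := hyq.2
      simp only [hm]
      rcases min_cases p.1 q.1 with ⟨h1, _⟩ | ⟨h1, _⟩ <;>
      rcases max_cases p.2 q.2 with ⟨h2, _⟩ | ⟨h2, _⟩ <;> rw [h1, h2] <;> linarith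
    have hsum : ∑ x ∈ insert m E, (x.2 - x.1) ≤ ∑ x ∈ F, (x.2 - x.1) := by
      have : ∑ x ∈ insert m E, (x.2 - x.1) ≤ (m.2 - m.1) + ∑ x ∈ E, (x.2 - x.1) := by
        by_cases hmE : m ∈ E
        · rw [Finset.insert_eq_of_mem hmE]; linarith
        · rw [Finset.sum_insert hmE]
      linarith
    obtain ⟨G, g1, g2, g3, g4⟩ := ih (insert m E).card (by omega) (insert m E) rfl (by
      intro x hx
      rcases Finset.mem_insert.1 hx with rfl | hx
      · exact hm12
      · exact hle x (hEF x hx))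
    refine ⟨G, by omega, g2, fun x hx => (g3 x hx).trans hsum, ?_⟩
    intro x r hr hx
    by_cases hrp : r = p
    · subst hrp
      exact g4 x m (Finset.mem_insert_self _ _)
        ⟨(min_le_left _ _).trans hx.1, hx.2.trans (le_max_left _ _)⟩
    by_cases hrq : r = q
    · subst hrq
      exact g4 x m (Finset.mem_insert_self _ _)
        ⟨(min_le_right _ _).trans hx.1, hx.2.trans (le_max_right _ _)⟩
    exact g4 x r (Finset.mem_insert_of_mem
      (Finset.mem_erase.2 ⟨hrq, Finset.mem_erase.2 ⟨hrp, hr⟩⟩)) hx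

theorem cover_aux (S : Set ℝ) (A : Finset ℝ) (r : ℝ) (hr : 0 ≤ r) (hA : A.card ≤ 40)
    (h : ∀ x ∈ S, ∃ c ∈ A, |x - c| ≤ r) :
    ∃ (n : ℕ) (a b : Fin n → ℝ), n ≤ 40 ∧
        Pairwise (Function.onFun Disjoint fun i => Set.Icc (a i) (b i)) ∧
        (∀ i, b i - a i ≤ 80 * r) ∧ S ⊆ ⋃ i, Set.Icc (a i) (b i) := by
  classical
  set F : Finset (ℝ × ℝ) := A.image (fun c => (c - r, c + r)) with hF
  have hFc : F.card ≤ 40 := Finset.card_image_le.trans hA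
  have hFl : ∀ p ∈ F, p.2 - p.1 = 2 * r := by
    intro p hp
    obtain ⟨c, _, rfl⟩ := Finset.mem_image.1 hp
    simp only; ring
  obtain ⟨G, g1, g2, g3, g4⟩ := merge_aux F.card F rfl
    (fun p hp => by have := hFl p hp; linarith)
  have hsum : ∑ q ∈ F, (q.2 - q.1) ≤ 80 * r := by
    rw [Finset.sum_congr rfl hFl, Finset.sum_const, nsmul_eq_mul]
    have : (F.card : ℝ) ≤ 40 := by exact_mod_cast hFc
    nlinarith
  refine ⟨G.card, fun i => (G.equivFin.symm i).1.1, fun i => (G.equivFin.symm i).1.2,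
    g1.trans hFc, ?_, ?_, ?_⟩
  · intro i j hij
    apply g2 _ (G.equivFin.symm i).2 _ (G.equivFin.symm j).2
    intro he
    exact hij (G.equivFin.symm.injective (Subtype.ext he))
  · intro i
    exact (g3 _ (G.equivFin.symm i).2).trans hsum
  · intro x hx
    obtain ⟨c, hc, hxc⟩ := h x hx
    rw [abs_le] at hxc
    obtain ⟨q, hq, hxq⟩ := g4 x (c - r, c + r) (Finset.mem_image_of_mem _ hc)
      ⟨by simp only; linarith, by simp only; linarith⟩
    refine Set.mem_iUnion.2 ⟨G.equivFin ⟨q, hq⟩, ?_⟩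
    simpa using hxq

theorem near_aux (y s : ℝ) (hy : |y| ≤ π / 2) (h : |Real.sin y| ≤ s) : |y| ≤ 2 * s := by
  have h1 := Real.mul_abs_le_abs_sin hy
  have h2 : |y| ≤ π / 2 * s := by
    have h3 : 2 / π * |y| ≤ s := h1.trans h
    have := mul_le_mul_of_nonneg_left h3 (by positivity : 0 ≤ π / 2)
    have e : π / 2 * (2 / π * |y|) = |y| := by field_simp
    linarith
  have : 0 ≤ s := (abs_nonneg _).trans h
  nlinarith [Real.pi_lt_four]

theorem sin_aux (β : ℝ) : ∃ A : Finset ℝ, A.card ≤ 3 ∧ ∀ θ ∈ Set.Ico (0 : ℝ) π, ∀ s : ℝ,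
    |Real.sin (θ - β)| ≤ s → ∃ c ∈ A, |θ - c| ≤ 2 * s := by
  classical
  obtain ⟨k, hk, -⟩ := existsUnique_sub_zsmul_mem_Ico Real.pi_pos β 0
  simp only [zero_add, zsmul_eq_mul] at hk
  set b := β - k * π with hb
  refine ⟨{b - π, b, b + π}, Finset.card_le_three, ?_⟩
  intro θ hθ s hs
  have e0 : |Real.sin (θ - b)| = |Real.sin (θ - β)| := by
    rw [hb, show θ - (β - k * π) = (θ - β) + k * π by ring, Real.sin_add_int_mul_pi, abs_mul]
    simp
  obtain ⟨h1, h2⟩ := hθ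
  obtain ⟨h3, h4⟩ := hk
  by_cases c1 : θ - b ≤ -(π / 2)
  · refine ⟨b - π, by simp, near_aux _ _ (abs_le.2 ⟨by linarith, by linarith⟩) ?_⟩
    rw [show θ - (b - π) = (θ - b) + π by ring, Real.sin_add_pi, abs_neg, e0]; exact hs
  by_cases c2 : π / 2 ≤ θ - b
  · refine ⟨b + π, by simp, near_aux _ _ (abs_le.2 ⟨by linarith, by linarith⟩) ?_⟩
    rw [show θ - (b + π) = (θ - b) - π by ring, Real.sin_sub_pi, abs_neg, e0]; exact hs
  · refine ⟨b, by simp, near_aux _ _ (abs_le.2 ⟨by linarith, by linarith⟩) ?_⟩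
    rw [e0]; exact hs

theorem level_aux (ψ κ : ℝ) : ∃ A : Finset ℝ, A.card ≤ 6 ∧ ∀ θ ∈ Set.Ico (0 : ℝ) π, ∀ s : ℝ,
    0 ≤ s → |Real.sin (ψ - 2 * θ) - κ| ≤ 2 * s ^ 2 → ∃ c ∈ A, |θ - c| ≤ 2 * s := by
  classical
  set κ' := max (-1) (min 1 κ) with hκ
  set α := Real.arcsin κ' with hα
  have hsα : Real.sin α = κ' := Real.sin_arcsin (le_max_left _ _)
    (max_le (by norm_num) (min_le_left _ _))
  obtain ⟨A, hA, hA'⟩ := sin_aux ((ψ - α) / 2)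
  obtain ⟨B, hB, hB'⟩ := sin_aux ((ψ + α) / 2 - π / 2)
  refine ⟨A ∪ B, (Finset.card_union_le _ _).trans (by omega), ?_⟩
  intro θ hθ s hs h
  have h' : |Real.sin (ψ - 2 * θ) - κ'| ≤ 2 * s ^ 2 := by
    have := Real.neg_one_le_sin (ψ - 2 * θ)
    have := Real.sin_le_one (ψ - 2 * θ)
    rw [abs_le] at h ⊢
    rw [hκ]
    have : 0 ≤ s ^ 2 := sq_nonneg s
    rcases min_cases 1 κ with ⟨h1, _⟩ | ⟨h1, _⟩ <;> rw [h1] <;>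
    [skip; rcases max_cases (-1) κ with ⟨h2, _⟩ | ⟨h2, _⟩ <;> rw [h2]]
    · rw [max_eq_right (by norm_num)]; constructor <;> linarith [h.1, h.2]
    · constructor <;> linarith [h.1, h.2]
    · exact h
  have e1 : Real.sin (ψ - 2 * θ) - κ' =
      -2 * (Real.sin (θ - (ψ - α) / 2) * Real.sin (θ - ((ψ + α) / 2 - π / 2))) := by
    rw [← hsα, Real.sin_sub_sin,
      show θ - ((ψ + α) / 2 - π / 2) = -((ψ - 2 * θ + α) / 2) + π / 2 by ring,
      Real.sin_add_pi_div_two, Real.cos_neg,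
      show θ - (ψ - α) / 2 = -((ψ - 2 * θ - α) / 2) by ring, Real.sin_neg]
    ring
  rw [e1, abs_mul, abs_mul] at h'
  norm_num at h'
  by_cases c : |Real.sin (θ - (ψ - α) / 2)| ≤ s
  · obtain ⟨c, hc, hc'⟩ := hA' θ hθ s c
    exact ⟨c, Finset.mem_union_left _ hc, hc'⟩
  · have : |Real.sin (θ - ((ψ + α) / 2 - π / 2))| ≤ s := by
      by_contra hcon
      push Not at c hcon
      nlinarith
    obtain ⟨c, hc, hc'⟩ := hB' θ hθ s this
    exact ⟨c, Finset.mem_union_right _ hc, hc'⟩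

theorem polar_aux (z : Pt) : ∃ R φ : ℝ, 0 ≤ R ∧ z.1 = R * Real.cos φ ∧ z.2 = R * Real.sin φ :=
  ⟨‖(⟨z.1, z.2⟩ : ℂ)‖, Complex.arg ⟨z.1, z.2⟩, norm_nonneg _,
    by rw [Complex.norm_mul_cos_arg], by rw [Complex.norm_mul_sin_arg]⟩

theorem nrm_four (z : Pt) : nrm z ^ 4 = (z.1 ^ 2 + z.2 ^ 2) ^ 2 := by
  unfold nrm
  rw [show (4 : ℕ) = 2 * 2 from rfl, pow_mul, Real.sq_sqrt (by positivity)]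

theorem dH_nonneg (v w : Heis) : 0 ≤ dH v w := by
  unfold dH; rw [nrm_four]; positivity

theorem dH_four (v w : Heis) : dH v w ^ 4 =
    ((v.1.1 - w.1.1) ^ 2 + (v.1.2 - w.1.2) ^ 2) ^ 2
      + (v.2 - w.2 - 2 * (v.1.1 * w.1.2 - v.1.2 * w.1.1)) ^ 2 := by
  unfold dH
  rw [nrm_four, ← Real.rpow_natCast, ← Real.rpow_mul (by positivity)]
  norm_num [wedge]

theorem dH_proj (v w : Heis) (R φ S σ θ : ℝ)
    (hu1 : v.1.1 - w.1.1 = R * Real.cos φ) (hu2 : v.1.2 - w.1.2 = R * Real.sin φ)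
    (hs1 : v.1.1 + w.1.1 = S * Real.cos σ) (hs2 : v.1.2 + w.1.2 = S * Real.sin σ) :
    dH (PVperp θ v) (PVperp θ w) ^ 4 = (R * Real.sin (θ - φ)) ^ 4
      + (v.2 - w.2 - S * R * Real.sin (φ + σ - 2 * θ)) ^ 2 := by
  obtain ⟨⟨z1, z2⟩, t⟩ := v
  obtain ⟨⟨w1, w2⟩, τ⟩ := w
  simp only at hu1 hu2 hs1 hs2
  rw [dH_four]
  simp only [PVperp, projV, projVperp, dotP, eV, ieV, wedge, Prod.smul_mk, smul_eq_mul]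
  have hc := Real.sin_sq_add_cos_sq θ
  have e : φ + σ - 2 * θ = (φ - θ) + (σ - θ) := by ring
  rw [e, Real.sin_add, Real.sin_sub, Real.sin_sub, Real.cos_sub, Real.sin_sub, Real.cos_sub]
  have a1 : z1 = (S * Real.cos σ + R * Real.cos φ) / 2 := by linarith
  have a2 : z2 = (S * Real.sin σ + R * Real.sin φ) / 2 := by linarith
  have a3 : w1 = (S * Real.cos σ - R * Real.cos φ) / 2 := by linarith
  have a4 : w2 = (S * Real.sin σ - R * Real.sin φ) / 2 := by linarith
  subst a1 a2 a3 a4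
  generalize Real.cos φ = cφ, Real.sin φ = sφ, Real.cos σ = cσ, Real.sin σ = sσ at *
  generalize Real.cos θ = c, Real.sin θ = s at *
  congr 1
  · have : ∀ p : ℝ, ((p * s) ^ 2 + (p * c) ^ 2) ^ 2 = p ^ 4 := by
      intro p
      rw [show (p * s) ^ 2 + (p * c) ^ 2 = p ^ 2 * (s ^ 2 + c ^ 2) by ring, hc]; ring
    rw [← this]; ring
  · have hw : ∀ a b : ℝ, a * c * (b * c) - a * s * (b * -s) = a * b := by
      intro a b
      rw [show a * c * (b * c) - a * s * (b * -s) = a * b * (s ^ 2 + c ^ 2) by ring, hc, mul_one]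
    rw [hw, hw]; ring

set_option maxHeartbeats 1000000

/-- The transversality lemma: {θ ∈ [0,π) : d_ℍ(P_{V_θ^⊥}v, P_{V_θ^⊥}w) ≤ δ} is
contained in at most 40 disjoint intervals, each of length less than Cδ/d_ℍ(v,w). -/
theorem stmt_14 :
    ∃ C : ℝ, 0 < C ∧ ∀ v w : Heis, v ≠ w → ∀ δ : ℝ, 0 < δ →
      ∃ (n : ℕ) (a b : Fin n → ℝ), n ≤ 40 ∧
        Pairwise (Function.onFun Disjoint fun i => Set.Icc (a i) (b i)) ∧
        (∀ i, b i - a i < C * δ / dH v w) ∧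
        {θ ∈ Set.Ico 0 Real.pi | dH (PVperp θ v) (PVperp θ w) ≤ δ} ⊆
          ⋃ i, Set.Icc (a i) (b i) := by
  refine ⟨1000, by norm_num, ?_⟩
  intro v w hvw δ hδ
  set D := dH v w with hD
  have hD4 := dH_four v w
  rw [← hD] at hD4
  have hDpos : 0 < D := by
    rcases (dH_nonneg v w).lt_or_eq with h | h
    · exact h
    exfalso
    apply hvw
    rw [hD, ← h] at hD4
    have h1 : v.1.1 - w.1.1 = 0 := by
      by_contra hne
      have : 0 < (v.1.1 - w.1.1) ^ 2 := by positivity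
      have : 0 < ((v.1.1 - w.1.1) ^ 2 + (v.1.2 - w.1.2) ^ 2) ^ 2 := by positivity
      nlinarith [sq_nonneg (v.2 - w.2 - 2 * (v.1.1 * w.1.2 - v.1.2 * w.1.1))]
    have h2 : v.1.2 - w.1.2 = 0 := by
      by_contra hne
      have : 0 < (v.1.2 - w.1.2) ^ 2 := by positivity
      have : 0 < ((v.1.1 - w.1.1) ^ 2 + (v.1.2 - w.1.2) ^ 2) ^ 2 := by positivity
      nlinarith [sq_nonneg (v.2 - w.2 - 2 * (v.1.1 * w.1.2 - v.1.2 * w.1.1))]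
    have h1' : v.1.1 = w.1.1 := by linarith
    have h2' : v.1.2 = w.1.2 := by linarith
    have h3 : (v.2 - w.2) ^ 2 = 0 := by
      rw [h1', h2'] at hD4; ring_nf at hD4 ⊢; linarith
    have h3' : v.2 = w.2 := by
      have := pow_eq_zero_iff (two_ne_zero) |>.1 h3
      linarith
    exact Prod.ext (Prod.ext h1' h2') h3'
  obtain ⟨R, φ, hR, hu1, hu2⟩ := polar_aux (v.1 - w.1)
  obtain ⟨S, σ, hS, hs1, hs2⟩ := polar_aux (v.1 + w.1)
  simp only [Prod.fst_sub, Prod.snd_sub, Prod.fst_add, Prod.snd_add] at hu1 hu2 hs1 hs2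
  set T := v.2 - w.2 - 2 * (v.1.1 * w.1.2 - v.1.2 * w.1.1) with hT
  have hTe : T = v.2 - w.2 + S * R * Real.sin (φ - σ) := by
    rw [Real.sin_sub, hT]
    have : S * R * (Real.sin φ * Real.cos σ - Real.cos φ * Real.sin σ)
      = (R * Real.sin φ) * (S * Real.cos σ) - (R * Real.cos φ) * (S * Real.sin σ) := by ring
    rw [this, ← hu1, ← hu2, ← hs1, ← hs2]; ring
  have hN : D ^ 4 = R ^ 4 + T ^ 2 := by
    rw [hD4, hu1, hu2]
    congr 1
    rw [show (R * Real.cos φ) ^ 2 + (R * Real.sin φ) ^ 2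
      = R ^ 2 * (Real.sin φ ^ 2 + Real.cos φ ^ 2) by ring, Real.sin_sq_add_cos_sq]; ring
  set η := δ / D with hη
  have hηpos : 0 < η := div_pos hδ hDpos
  have hδη : δ = η * D := by rw [hη]; field_simp
  suffices H : ∃ A : Finset ℝ, A.card ≤ 40 ∧
      ∀ θ ∈ {θ ∈ Set.Ico 0 Real.pi | dH (PVperp θ v) (PVperp θ w) ≤ δ},
        ∃ c ∈ A, |θ - c| ≤ 8 * η by
    obtain ⟨A, hA, hA'⟩ := H
    obtain ⟨n, a, b, h1, h2, h3, h4⟩ := cover_aux _ A (8 * η) (by positivity) hA hA'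
    refine ⟨n, a, b, h1, h2, fun i => ?_, h4⟩
    rw [mul_div_assoc, ← hη]
    have := h3 i
    linarith
  have hmem : ∀ θ, dH (PVperp θ v) (PVperp θ w) ≤ δ → (R * Real.sin (θ - φ)) ^ 4
      + (v.2 - w.2 - S * R * Real.sin (φ + σ - 2 * θ)) ^ 2 ≤ δ ^ 4 := by
    intro θ h
    rw [← dH_proj v w R φ S σ θ hu1 hu2 hs1 hs2]
    exact pow_le_pow_left₀ (dH_nonneg _ _) h 4
  by_cases hbig : 1 / 4 ≤ η
  · refine ⟨{π / 2}, by simp, fun θ hθ => ⟨π / 2, by simp, ?_⟩⟩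
    rw [abs_le]
    obtain ⟨⟨h1, h2⟩, -⟩ := hθ
    have := Real.pi_lt_four
    constructor <;> linarith
  push Not at hbig
  have hδD : δ ^ 2 < D ^ 2 / 16 := by
    have h1 : δ < D / 4 := by rw [hδη]; nlinarith
    nlinarith
  by_cases hcase : D / 2 ≤ R
  · obtain ⟨A, hA, hA'⟩ := sin_aux φ
    refine ⟨A, by omega, fun θ hθ => ?_⟩
    obtain ⟨h1, h2⟩ := hθ
    have h3 := hmem θ h2
    have h4 : |R * Real.sin (θ - φ)| ^ 4 ≤ δ ^ 4 := by
      rw [Even.pow_abs (by decide)]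
      nlinarith [sq_nonneg (v.2 - w.2 - S * R * Real.sin (φ + σ - 2 * θ))]
    have h5 := le_of_pow_le_pow_left₀ (by norm_num) hδ.le h4
    rw [abs_mul, abs_of_nonneg hR] at h5
    have h6 : |Real.sin (θ - φ)| ≤ 2 * η := by
      have := mul_le_mul_of_nonneg_right hcase (abs_nonneg (Real.sin (θ - φ)))
      rw [hη, ← mul_div_assoc, le_div_iff₀ hDpos]
      linarith
    obtain ⟨c, hc, hc'⟩ := hA' θ h1 _ h6
    exact ⟨c, hc, by linarith⟩
  push Not at hcase
  have hTbig : D ^ 2 / 2 ≤ |T| := by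
    have h1 : R ^ 4 ≤ (D / 2) ^ 4 := pow_le_pow_left₀ hR hcase.le 4
    apply le_of_pow_le_pow_left₀ two_ne_zero (abs_nonneg T)
    rw [sq_abs]
    have : 0 < D ^ 4 := by positivity
    nlinarith
  have hQ : ∀ θ, dH (PVperp θ v) (PVperp θ w) ≤ δ →
      |v.2 - w.2 - S * R * Real.sin (φ + σ - 2 * θ)| ≤ δ ^ 2 := by
    intro θ h
    have h3 := hmem θ h
    apply le_of_pow_le_pow_left₀ two_ne_zero (by positivity)
    rw [sq_abs]
    have : 0 ≤ (R * Real.sin (θ - φ)) ^ 4 := by positivity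
    nlinarith
  have hSR : 0 ≤ S * R := mul_nonneg hS hR
  by_cases hsr : D ^ 2 / 16 ≤ S * R
  · have hSRpos : 0 < S * R := lt_of_lt_of_le (by positivity) hsr
    obtain ⟨A, hA, hA'⟩ := level_aux (φ + σ) ((v.2 - w.2) / (S * R))
    refine ⟨A, by omega, fun θ hθ => ?_⟩
    obtain ⟨h1, h2⟩ := hθ
    have h3 := hQ θ h2
    have h4 : |Real.sin (φ + σ - 2 * θ) - (v.2 - w.2) / (S * R)| ≤ 2 * (4 * η) ^ 2 := by
      have e : v.2 - w.2 - S * R * Real.sin (φ + σ - 2 * θ)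
        = -(S * R) * (Real.sin (φ + σ - 2 * θ) - (v.2 - w.2) / (S * R)) := by
        have := mul_div_cancel₀ (v.2 - w.2) hSRpos.ne'
        linear_combination -this
      rw [e, abs_mul, abs_neg, abs_of_pos hSRpos] at h3
      have h5 := mul_le_mul_of_nonneg_right hsr
        (abs_nonneg (Real.sin (φ + σ - 2 * θ) - (v.2 - w.2) / (S * R)))
      set X := |Real.sin (φ + σ - 2 * θ) - (v.2 - w.2) / (S * R)|
      have h6 : D ^ 2 * X ≤ D ^ 2 * (16 * η ^ 2) := by
        have : δ ^ 2 = D ^ 2 * η ^ 2 := by rw [hδη]; ring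
        linarith
      have h7 := le_of_mul_le_mul_left h6 (by positivity)
      have h8 : 2 * (4 * η) ^ 2 = 32 * η ^ 2 := by ring
      have h9 := sq_nonneg η
      linarith
    obtain ⟨c, hc, hc'⟩ := hA' θ h1 (4 * η) (by positivity) h4
    exact ⟨c, hc, by linarith⟩
  · push Not at hsr
    refine ⟨∅, by simp, fun θ hθ => ?_⟩
    exfalso
    have h3 := hQ θ hθ.2
    have b : ∀ x, |S * R * Real.sin x| ≤ S * R := by
      intro x
      rw [abs_mul, abs_of_nonneg hSR]
      exact mul_le_of_le_one_right hSR (Real.abs_sin_le_one x)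
    have b1 := abs_le.1 (b (φ - σ))
    have b2 := abs_le.1 (b (φ + σ - 2 * θ))
    have b3 := abs_le.1 h3
    have hD2 : 0 < D ^ 2 := by positivity
    rcases le_abs.1 hTbig with h | h <;> linarith [b1.1, b1.2, b2.1, b2.2, b3.1, b3.2]
end
end

section
/- Let A be an analytic subset of the first Heisenberg group ℍ (with the Korányi metric) with Hausdorff dimension dim A = s ∈ (2,4]. Then for almost every θ ∈ [0,π), dim P_{V_θ^⊥}(A) ≥ s/2 if s ∈ (2, 5/2], and dim P_{V_θ^⊥}(A) ≥ s(s+2)/(4s−1) if s ∈ (5/2, 4]. -/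
open Real MeasureTheory

noncomputable section

/-- Diameter of a set with respect to the Korányi distance, valued in ENNReal. -/
def ediamK (S : Set Heis) : ENNReal :=
  ⨆ (x : Heis) (_ : x ∈ S) (y : Heis) (_ : y ∈ S), ENNReal.ofReal (dH x y)

/-- s-dimensional Hausdorff measure with respect to the Korányi distance. -/
def hMeasK (s : ℝ) (A : Set Heis) : ENNReal :=
  ⨆ (δ : ℝ) (_ : 0 < δ),
    ⨅ (t : ℕ → Set Heis) (_ : A ⊆ ⋃ n, t n)
      (_ : ∀ n, ediamK (t n) ≤ ENNReal.ofReal δ),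
      ∑' n, ediamK (t n) ^ s

/-- Hausdorff dimension with respect to the Korányi distance. -/
def hDimK (A : Set Heis) : ℝ :=
  sInf {s : ℝ | 0 ≤ s ∧ hMeasK s A = 0}

section PartB1
open Real MeasureTheory
open scoped ENNReal

namespace Fro
section content
variable {C ι : Type*} (code : ℕ → C → ι) (w : ℕ → ℝ≥0∞)

def cell (c : ℕ × ι) : Set C := {b | code c.1 b = c.2}

noncomputable def cost (S : Set (ℕ × ι)) : ℝ≥0∞ := ∑' c, S.indicator (fun c => w c.1) c

def Covers (S : Set (ℕ × ι)) (E : Set C) : Prop := ∀ b ∈ E, ∃ c ∈ S, b ∈ cell code c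

noncomputable def cont (E : Set C) : ℝ≥0∞ := ⨅ (S : Set (ℕ × ι)) (_ : Covers code S E), cost w S

lemma cost_mono {S T : Set (ℕ × ι)} (h : S ⊆ T) : cost w S ≤ cost w T :=
  ENNReal.tsum_le_tsum fun c => Set.indicator_le_indicator_of_subset h (fun _ => zero_le) c

lemma cont_le {S : Set (ℕ × ι)} {E : Set C} (h : Covers code S E) : cont code w E ≤ cost w S :=
  iInf₂_le S h

lemma cont_mono {E F : Set C} (h : E ⊆ F) : cont code w E ≤ cont code w F :=
  le_iInf₂ fun S hS => cont_le code w (fun b hb => hS b (h hb))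

lemma cost_union (S T : Set (ℕ × ι)) : cost w (S ∪ T) ≤ cost w S + cost w T := by
  unfold cost
  rw [← ENNReal.tsum_add]
  refine ENNReal.tsum_le_tsum fun c => ?_
  classical
  by_cases h1 : c ∈ S <;> by_cases h2 : c ∈ T <;> simp [Set.indicator, h1, h2]

lemma cont_lt_exists {E : Set C} {x : ℝ≥0∞} (h : cont code w E < x) :
    ∃ S, Covers code S E ∧ cost w S < x := by
  unfold cont at h
  simp only [iInf_lt_iff] at h
  obtain ⟨S, hS, h⟩ := h
  exact ⟨S, hS, h⟩

lemma cont_union (E F : Set C) : cont code w (E ∪ F) ≤ cont code w E + cont code w F := by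
  unfold cont
  rw [ENNReal.iInf_add]
  refine le_iInf fun S => ?_
  rw [ENNReal.iInf_add]
  refine le_iInf fun hS => ?_
  rw [ENNReal.add_iInf]
  refine le_iInf fun T => ?_
  rw [ENNReal.add_iInf]
  refine le_iInf fun hT => ?_
  refine le_trans (cont_le code w (S := S ∪ T) ?_) (cost_union w S T)
  rintro b (hb | hb)
  · obtain ⟨c, hc, h⟩ := hS b hb
    exact ⟨c, Or.inl hc, h⟩
  · obtain ⟨c, hc, h⟩ := hT b hb
    exact ⟨c, Or.inr hc, h⟩

lemma cont_empty : cont code w ∅ = 0 := by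
  refine le_antisymm ?_ zero_le
  refine (cont_le code w (S := ∅) (fun b hb => hb.elim)).trans ?_
  simp [cost]

lemma cont_finset {κ : Type*} (s : Finset κ) (E : κ → Set C) :
    cont code w (⋃ i ∈ s, E i) ≤ ∑ i ∈ s, cont code w (E i) := by
  classical
  induction s using Finset.induction_on with
  | empty => simp [cont_empty]
  | insert a s ha ih =>
    rw [Finset.set_biUnion_insert, Finset.sum_insert ha]
    exact (cont_union code w _ _).trans (by gcongr)

lemma cont_cell {E : Set C} (c : ℕ × ι) (h : E ⊆ cell code c) : cont code w E ≤ w c.1 := by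
  refine (cont_le code w (S := {c}) (fun b hb => ⟨c, rfl, h hb⟩)).trans ?_
  unfold cost
  rw [tsum_eq_single c]
  · simp
  · intro c' hc'
    simp [hc']

def Nested : Prop := ∀ k b b', code (k+1) b = code (k+1) b' → code k b = code k b'

variable {code}
lemma Nested.le (h : Nested code) {k l : ℕ} (hkl : k ≤ l) {b b' : C} (e : code l b = code l b') :
    code k b = code k b' := by
  induction l, hkl using Nat.le_induction with
  | base => exact e
  | succ l _ ih => exact ih (h _ _ _ e)

variable (code)
def maxi (S : Set (ℕ × ι)) : Set (ℕ × ι) :=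
  {c ∈ S | ∀ c' ∈ S, (cell code c ∩ cell code c').Nonempty → c.1 ≤ c'.1}

variable {code}
lemma maxi_covers (hn : Nested code) {S : Set (ℕ × ι)} {E : Set C} (h : Covers code S E) :
    Covers code (maxi code S) E := by
  classical
  intro b hb
  have : ∃ k, ∃ c ∈ S, b ∈ cell code c ∧ c.1 = k := by
    obtain ⟨c, hc, h⟩ := h b hb
    exact ⟨c.1, c, hc, h, rfl⟩
  obtain ⟨c, hc, hbc, hk⟩ := Nat.find_spec this
  refine ⟨c, ⟨hc, ?_⟩, hbc⟩
  rintro c' hc' ⟨x, hx, hx'⟩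
  by_contra hlt
  push Not at hlt
  have : b ∈ cell code c' := by
    have h1 : code c.1 b = code c.1 x := by rw [hbc, hx]
    have h2 := hn.le hlt.le h1
    change code c'.1 b = c'.2
    rw [h2]; exact hx'
  exact absurd (Nat.find_min' ‹∃ k, ∃ c ∈ S, b ∈ cell code c ∧ c.1 = k› ⟨c', hc', this, rfl⟩) (by omega)

lemma maxi_anti {S T : Set (ℕ × ι)} (h : S ⊆ T) {c} (hc : c ∈ maxi code T) (hS : c ∈ S) :
    c ∈ maxi code S := ⟨hS, fun c' hc' => hc.2 c' (h hc')⟩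

lemma cont_step (hn : Nested code) {D T : Set (ℕ × ι)} {E : Set C} (hD : Covers code D E)
    (hT : Covers code T E) :
    cost w (maxi code (D ∪ T)) + cont code w E ≤ cost w (maxi code D) + cost w T := by
  classical
  set V := maxi code D
  set X := maxi code (D ∪ T)
  set R := ((V ∪ T) \ X) ∪ (V ∩ T)
  have hXs : X ⊆ V ∪ T := by
    intro c hc
    rcases hc.1 with h | h
    · exact Or.inl (maxi_anti Set.subset_union_left hc h)
    · exact Or.inr h
  have hR : Covers code R E := by
    intro b hb
    obtain ⟨c, hc, hbc⟩ := maxi_covers hn hD b hb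
    obtain ⟨c', hc', hbc'⟩ := hT b hb
    rcases lt_trichotomy c.1 c'.1 with h | h | h
    · refine ⟨c', Or.inl ⟨Or.inr hc', fun hX => ?_⟩, hbc'⟩
      exact absurd (hX.2 c (Or.inl hc.1) ⟨b, hbc', hbc⟩) (by omega)
    · have : c = c' := by
        refine Prod.ext h ?_
        have h1 : code c.1 b = c.2 := hbc
        have h2 : code c'.1 b = c'.2 := hbc'
        rw [← h1, ← h2, h]
      subst this
      exact ⟨c, Or.inr ⟨hc, hc'⟩, hbc⟩
    · refine ⟨c, Or.inl ⟨Or.inl hc, fun hX => ?_⟩, hbc⟩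
      exact absurd (hX.2 c' (Or.inr hc') ⟨b, hbc, hbc'⟩) (by omega)
  calc cost w X + cont code w E ≤ cost w X + cost w R := by gcongr; exact cont_le code w hR
    _ ≤ cost w V + cost w T := by
      unfold cost
      rw [← ENNReal.tsum_add, ← ENNReal.tsum_add]
      refine ENNReal.tsum_le_tsum fun c => ?_
      by_cases h3 : c ∈ X
      · by_cases h1 : c ∈ V <;> by_cases h2 : c ∈ T
        · simp [Set.indicator, h1, h2, h3, R]
        · simp [Set.indicator, h1, h2, h3, R]
        · simp [Set.indicator, h1, h2, h3, R]
        · exact absurd (hXs h3) (by simp [h1, h2])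
      · by_cases h1 : c ∈ V <;> by_cases h2 : c ∈ T <;> simp [Set.indicator, h1, h2, h3, R]

lemma cont_iUnion (hn : Nested code) {E : ℕ → Set C} (hE : Monotone E) :
    cont code w (⋃ n, E n) ≤ ⨆ n, cont code w (E n) := by
  classical
  set L := ⨆ n, cont code w (E n) with hL
  refine ENNReal.le_of_forall_pos_le_add fun ε hε hLt => ?_
  obtain ⟨e, he0, hesum⟩ := ENNReal.exists_pos_sum_of_countable (ε := (ε : ℝ≥0∞)) (by positivity) ℕ
  have hle : ∀ n, cont code w (E n) ≤ L := fun n => le_iSup (fun n => cont code w (E n)) n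
  have hex : ∀ n, ∃ S, Covers code S (E n) ∧ cost w S < cont code w (E n) + e n := fun n =>
    cont_lt_exists code w (ENNReal.lt_add_right ((hle n).trans_lt hLt).ne (by simpa using (he0 n).ne'))
  choose S hS hScost using hex
  let D : ℕ → Set (ℕ × ι) := fun n => ⋃ j ∈ Finset.range (n+1), S j
  have hDs : ∀ n, D (n+1) = D n ∪ S (n+1) := by
    intro n
    simp only [D]
    rw [Finset.range_add_one (n := n+1), Finset.set_biUnion_insert, Set.union_comm]
  have hD0 : D 0 = S 0 := by simp [D]
  have hSD : ∀ n, S n ⊆ D n := fun n => by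
    intro c hc
    simp only [D, Set.mem_iUnion]
    exact ⟨n, by simp, hc⟩
  have hDmono : Monotone D := monotone_nat_of_le_succ (fun n => by rw [hDs]; exact Set.subset_union_left)
  have hDc : ∀ n, Covers code (D n) (E n) := fun n b hb => by
    obtain ⟨c, hc, h⟩ := hS n b hb
    exact ⟨c, hSD n hc, h⟩
  have key : ∀ n, cost w (maxi code (D n)) ≤ cont code w (E n) + ∑ j ∈ Finset.range (n+1), (e j : ℝ≥0∞) := by
    intro n
    induction n with
    | zero =>
      rw [hD0]
      simp only [zero_add, Finset.range_one, Finset.sum_singleton]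
      exact (cost_mono w (fun c hc => hc.1)).trans (hScost 0).le
    | succ n ih =>
      have h1 := cont_step w hn (hDc n) (T := S (n+1))
        (fun b hb => hS (n+1) b (hE (Nat.le_succ n) hb))
      rw [← hDs] at h1
      have hfin : cont code w (E n) ≠ ⊤ := ((hle n).trans_lt hLt).ne
      refine (ENNReal.add_le_add_iff_right hfin).1 ?_
      refine h1.trans ((add_le_add ih (hScost (n+1)).le).trans (le_of_eq ?_))
      rw [Finset.sum_range_succ _ (n+1)]
      ring
  have hcov : Covers code (maxi code (⋃ n, D n)) (⋃ n, E n) := by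
    refine maxi_covers hn ?_
    intro b hb
    obtain ⟨n, hb⟩ := Set.mem_iUnion.1 hb
    obtain ⟨c, hc, h⟩ := hDc n b hb
    exact ⟨c, Set.mem_iUnion.2 ⟨n, hc⟩, h⟩
  refine (cont_le code w hcov).trans ?_
  unfold cost
  rw [ENNReal.tsum_eq_iSup_sum]
  refine iSup_le fun F => ?_
  -- finite subset in D n
  have hF : ∃ n, ∀ c ∈ F, c ∈ (⋃ n, D n) → c ∈ D n := by
    induction F using Finset.induction_on with
    | empty => exact ⟨0, by simp⟩
    | insert a F _ ih =>
      obtain ⟨n, hn'⟩ := ih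
      by_cases ha : a ∈ ⋃ n, D n
      · obtain ⟨m, hm⟩ := Set.mem_iUnion.1 ha
        refine ⟨max n m, ?_⟩
        intro c hc hcD
        rcases Finset.mem_insert.1 hc with rfl | hc
        · exact hDmono (le_max_right _ _) hm
        · exact hDmono (le_max_left _ _) (hn' c hc hcD)
      · refine ⟨n, ?_⟩
        intro c hc hcD
        rcases Finset.mem_insert.1 hc with rfl | hc
        · exact absurd hcD ha
        · exact hn' c hc hcD
  obtain ⟨n, hF⟩ := hF
  calc ∑ c ∈ F, (maxi code (⋃ n, D n)).indicator (fun c => w c.1) c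
      ≤ ∑ c ∈ F, (maxi code (D n)).indicator (fun c => w c.1) c := by
        refine Finset.sum_le_sum fun c hc => ?_
        by_cases h : c ∈ maxi code (⋃ n, D n)
        · have : c ∈ maxi code (D n) := maxi_anti (Set.subset_iUnion D n) h (hF c hc h.1)
          simp [h, this]
        · simp [h]
    _ ≤ cost w (maxi code (D n)) := ENNReal.sum_le_tsum _
    _ ≤ _ := key n
    _ ≤ L + ε := by
        gcongr
        · exact hle n
        · exact (ENNReal.sum_le_tsum _).trans hesum.le
end content
end Fro
end PartB1

section PartB2
open Real MeasureTheory
open scoped ENNReal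

namespace Fro
section capac
variable {C ι : Type*} [TopologicalSpace C] {code : ℕ → C → ι} (w : ℕ → ℝ≥0∞)

lemma cap_step (hn : Nested code) (f : (ℕ → ℕ) → C) {x : ℝ≥0∞} (B : Set (ℕ → ℕ)) (k : ℕ)
    (h : x < cont code w (f '' B)) : ∃ m, x < cont code w (f '' (B ∩ {y | y k ≤ m})) := by
  have hm : Monotone (fun m => f '' (B ∩ {y : ℕ → ℕ | y k ≤ m})) := by
    intro a b hab
    refine Set.image_mono (Set.inter_subset_inter_right _ ?_)
    intro y (hy : y k ≤ a)
    exact hy.trans hab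
  have h2 := cont_iUnion w hn hm
  have h3 : f '' B ⊆ ⋃ m, f '' (B ∩ {y : ℕ → ℕ | y k ≤ m}) := by
    rintro _ ⟨y, hy, rfl⟩
    exact Set.mem_iUnion.2 ⟨y k, y, ⟨hy, le_refl (y k)⟩, rfl⟩
  exact lt_iSup_iff.1 (h.trans_le ((cont_mono code w h3).trans h2))

lemma exists_compact (hn : Nested code) (ho : ∀ c, IsOpen (cell code c)) (f : (ℕ → ℕ) → C)
    (hf : Continuous f) {x : ℝ≥0∞} (h : x < cont code w (Set.range f)) :
    ∃ K ⊆ Set.range f, IsCompact K ∧ x ≤ cont code w K := by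
  classical
  let T := {B : Set (ℕ → ℕ) // x < cont code w (f '' B)}
  have hstep : ∀ (k : ℕ) (B : T), ∃ m, x < cont code w (f '' (B.1 ∩ {y | y k ≤ m})) :=
    fun k B => cap_step w hn f B.1 k B.2
  choose g hg using hstep
  let B : ℕ → T := fun n => Nat.rec ⟨Set.univ, by rwa [Set.image_univ]⟩
    (fun k B => ⟨B.1 ∩ {y | y k ≤ g k B}, hg k B⟩) n
  let m : ℕ → ℕ := fun k => g k (B k)
  have hB : ∀ k y, y ∈ (B k).1 ↔ ∀ i < k, y i ≤ m i := by
    intro k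
    induction k with
    | zero => intro y; simp [B]
    | succ k ih =>
      intro y
      have : (B (k+1)).1 = (B k).1 ∩ {y | y k ≤ m k} := rfl
      rw [this, Set.mem_inter_iff, ih]
      constructor
      · rintro ⟨h1, h2⟩ i hi
        rcases Nat.lt_succ_iff_lt_or_eq.1 hi with h | rfl
        · exact h1 i h
        · exact h2
      · intro h
        exact ⟨fun i hi => h i (by omega), h k (by omega)⟩
  let K0 : Set (ℕ → ℕ) := Set.pi Set.univ (fun i => Set.Iic (m i))
  have hK0 : IsCompact K0 := isCompact_univ_pi fun i => (Set.finite_Iic (m i)).isCompact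
  refine ⟨f '' K0, Set.image_subset_range _ _, hK0.image hf, ?_⟩
  refine le_iInf₂ fun S hS => ?_
  set U : Set C := ⋃ c ∈ S, cell code c with hU
  have hUo : IsOpen U := isOpen_biUnion fun c _ => ho c
  have hKU : K0 ⊆ f ⁻¹' U := by
    intro y hy
    obtain ⟨c, hc, h⟩ := hS _ ⟨y, hy, rfl⟩
    exact Set.mem_biUnion hc h
  have : ∃ n, ∀ y ∈ K0, ∀ z, (∀ i < n, z i = y i) → z ∈ f ⁻¹' U := by
    refine hK0.induction_on (p := fun s => ∃ n, ∀ y ∈ s, ∀ z, (∀ i < n, z i = y i) → z ∈ f ⁻¹' U)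
      ⟨0, by simp⟩ ?_ ?_ ?_
    · rintro s t hst ⟨n, h⟩
      exact ⟨n, fun y hy => h y (hst hy)⟩
    · rintro s t ⟨n, h⟩ ⟨n', h'⟩
      refine ⟨max n n', ?_⟩
      rintro y (hy | hy) z hz
      · exact h y hy z fun i hi => hz i (lt_max_of_lt_left hi)
      · exact h' y hy z fun i hi => hz i (lt_max_of_lt_right hi)
    · intro y hy
      have h1 : f ⁻¹' U ∈ nhds y := (hUo.preimage hf).mem_nhds (hKU hy)
      obtain ⟨t, ⟨a, n, rfl⟩, hyt, ht⟩ :=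
        (PiNat.isTopologicalBasis_cylinders (fun _ : ℕ => ℕ)).mem_nhds_iff.1 h1
      refine ⟨PiNat.cylinder a n, mem_nhdsWithin_of_mem_nhds
        ((PiNat.isOpen_cylinder _ a n).mem_nhds hyt), n, ?_⟩
      intro y' hy' z hz
      refine ht ?_
      intro i hi
      rw [hz i hi, hy' i hi]
  obtain ⟨n, hnn⟩ := this
  have hsub : Covers code S (f '' (B n).1) := by
    rintro _ ⟨y, hy, rfl⟩
    have hy' := (hB n y).1 hy
    have : y ∈ f ⁻¹' U := by
      refine hnn (fun i => min (y i) (m i)) (fun i _ => Set.mem_Iic.2 (min_le_right _ _)) y ?_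
      intro i hi
      exact (min_eq_left (hy' i hi)).symm
    obtain ⟨c, hc, h⟩ := Set.mem_iUnion₂.1 this
    exact ⟨c, hc, h⟩
  exact ((B n).2.trans_le (cont_le code w hsub)).le
end capac

section meas
variable {C ι : Type*} [MeasurableSpace C] {code : ℕ → C → ι} (w : ℕ → ℝ≥0∞)

/-- finite-depth measures -/
lemma exists_fin_depth (hn : Nested code) (hfin : ∀ k, (Set.range (code k)).Finite)
    (hm : ∀ c, MeasurableSet (cell code c)) (hw : ∀ k, w k ≠ ⊤) {K : Set C} (hK : MeasurableSet K) (j : ℕ) :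
    ∀ k q, ∃ ν : Measure C, ν (K ∩ cell code (k,q))ᶜ = 0 ∧
      ν Set.univ = cont code w (K ∩ cell code (k,q)) ∧
      ∀ l, k ≤ l → l ≤ k + j → ∀ r, ν (cell code (l, r)) ≤ cont code w (K ∩ cell code (l,r)) := by
  classical
  induction j with
  | zero =>
    intro k q
    by_cases he : (K ∩ cell code (k,q)).Nonempty
    · obtain ⟨x, hx⟩ := he
      refine ⟨cont code w (K ∩ cell code (k,q)) • Measure.dirac x, ?_, ?_, ?_⟩
      · have := hK.inter (hm (k,q))
        simp [Measure.dirac_apply' _ this.compl, hx.1, hx.2]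
      · simp
      · intro l h1 h2 r
        obtain rfl : l = k := by omega
        simp only [Measure.smul_apply, smul_eq_mul, Measure.dirac_apply' _ (hm _)]
        by_cases hxr : x ∈ cell code (l, r)
        · have : q = r := by
            have h1 : code l x = q := hx.2
            have h2 : code l x = r := hxr
            rw [← h1, h2]
          subst this
          simp [hxr]
        · simp [hxr]
    · rw [Set.not_nonempty_iff_eq_empty] at he
      refine ⟨0, by simp, ?_, by simp⟩
      rw [he, cont_empty]; simp
  | succ j ih =>
    intro k q
    set a : ℕ → ι → ℝ≥0∞ := fun k q => cont code w (K ∩ cell code (k,q)) with ha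
    have hatop : ∀ k q, a k q ≠ ⊤ := fun k q =>
      ((cont_cell code w (k,q) Set.inter_subset_right).trans_lt (hw k).lt_top).ne
    choose ν hν1 hν2 hν3 using ih (k+1)
    -- children
    let F : Finset ι := ((hfin (k+1)).toFinset).filter
      (fun d => (cell code (k+1, d) ∩ cell code (k,q)).Nonempty)
    have hch : ∀ d ∈ F, cell code (k+1,d) ⊆ cell code (k,q) := by
      intro d hd x hx
      obtain ⟨y, hy1, hy2⟩ := (Finset.mem_filter.1 hd).2
      have hx' : code (k+1) x = d := hx
      have hy' : code (k+1) y = d := hy1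
      have := hn k x y (by rw [hx', hy'])
      change code k x = q
      rw [this]; exact hy2
    have hcov : K ∩ cell code (k,q) ⊆ ⋃ d ∈ F, (K ∩ cell code (k+1,d)) := by
      rintro x ⟨hx1, hx2⟩
      refine Set.mem_biUnion (x := code (k+1) x) ?_ ⟨hx1, rfl⟩
      simp only [F, Finset.coe_filter, Set.Finite.mem_toFinset, Set.mem_ofPred_eq]
      exact ⟨⟨x, rfl⟩, x, rfl, hx2⟩
    have hsum : a k q ≤ ∑ d ∈ F, a (k+1) d :=
      (cont_mono code w hcov).trans (cont_finset code w F _)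
    set sa := ∑ d ∈ F, a (k+1) d with hsa
    have hsatop : sa ≠ ⊤ := (ENNReal.sum_lt_top.2 fun d _ => (hatop _ _).lt_top).ne
    have hlam : a k q / sa ≤ 1 := ENNReal.div_le_of_le_mul (by rwa [one_mul])
    -- ν d of cells at other levels
    have hνc : ∀ d, ∀ r, r ≠ d → ν d (cell code (k+1, r)) = 0 := by
      intro d r hr
      refine measure_mono_null ?_ (hν1 d)
      rintro x hx ⟨_, hx'⟩
      have h1 : code (k+1) x = r := hx
      have h2 : code (k+1) x = d := hx'
      exact hr (h1 ▸ h2)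
    have htot : ((a k q / sa) • ∑ d ∈ F, ν d) Set.univ = a k q := by
      simp only [Measure.smul_apply, Measure.finsetSum_apply, smul_eq_mul]
      have : ∑ d ∈ F, ν d Set.univ = sa := Finset.sum_congr rfl fun d _ => hν2 d
      rw [this]
      by_cases h0 : sa = 0
      · have : a k q = 0 := le_antisymm (h0 ▸ hsum) zero_le
        simp [h0, this]
      · exact ENNReal.div_mul_cancel h0 hsatop
    refine ⟨(a k q / sa) • ∑ d ∈ F, ν d, ?_, htot, ?_⟩
    · simp only [Measure.smul_apply, Measure.finsetSum_apply, smul_eq_mul]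
      rw [Finset.sum_eq_zero, mul_zero]
      intro d hd
      refine measure_mono_null ?_ (hν1 d)
      exact Set.compl_subset_compl.2 (Set.inter_subset_inter_right _ (hch d hd))
    · intro l h1 h2 r
      rcases h1.eq_or_lt with rfl | h1
      · by_cases hr : r = q
        · subst hr
          exact (measure_mono (Set.subset_univ _)).trans htot.le
        · refine le_trans (le_of_eq ?_) zero_le
          simp only [Measure.smul_apply, Measure.finsetSum_apply, smul_eq_mul]
          rw [Finset.sum_eq_zero, mul_zero]
          intro d hd
          refine measure_mono_null ?_ (hν1 d)
          rintro x hx ⟨_, hx'⟩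
          have h1 : code k x = r := hx
          have h2 : code k x = q := hch d hd hx'
          exact hr (h1 ▸ h2)
      · -- at most one d charges cell (l, r)
        have key : ∑ d ∈ F, ν d (cell code (l,r)) ≤ a l r := by
          by_cases hne : (cell code (l,r)).Nonempty
          · obtain ⟨y, hy⟩ := hne
            have : ∀ d ∈ F, d ≠ code (k+1) y → ν d (cell code (l,r)) = 0 := by
              intro d hd hdy
              refine measure_mono_null ?_ (hνc d (code (k+1) y) hdy.symm)
              intro x hx
              have h3 : code l x = r := hx
              have h4 : code l y = r := hy
              exact hn.le h1 (by rw [h3, h4])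
            by_cases hyF : code (k+1) y ∈ F
            · rw [Finset.sum_eq_single_of_mem _ hyF this]
              exact hν3 _ l h1 (by omega) r
            · rw [Finset.sum_eq_zero]
              · exact zero_le
              · intro d hd
                exact this d hd (fun h => hyF (h ▸ hd))
          · rw [Set.not_nonempty_iff_eq_empty] at hne
            simp [hne]
        simp only [Measure.smul_apply, Measure.finsetSum_apply, smul_eq_mul]
        calc _ ≤ 1 * a l r := by gcongr
          _ = _ := one_mul _
end meas
end Fro
end PartB2

section PartB3
open Real MeasureTheory Filter Topology
open scoped ENNReal

namespace Fro
section limitm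
variable {C ι : Type*} [TopologicalSpace C] [CompactSpace C] [T2Space C] [HasOuterApproxClosed C]
  [MeasurableSpace C] [BorelSpace C] {code : ℕ → C → ι} (w : ℕ → ℝ≥0∞)

lemma exists_limit (hn : Nested code) (h0 : ∀ b b', code 0 b = code 0 b')
    (hfin : ∀ k, (Set.range (code k)).Finite)
    (ho : ∀ c, IsOpen (cell code c)) (hw : ∀ k, w k ≠ ⊤) {K : Set C} (hK : IsCompact K)
    (hK0 : cont code w K ≠ 0) :
    ∃ ν : Measure C, IsProbabilityMeasure ν ∧ ν Kᶜ = 0 ∧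
      ∀ k q, ν (cell code (k,q)) ≤ (cont code w K)⁻¹ * w k := by
  have hne : K.Nonempty := by
    rw [Set.nonempty_iff_ne_empty]; rintro rfl; exact hK0 (cont_empty code w)
  obtain ⟨b0, hb0⟩ := hne
  have hKc : K ∩ cell code (0, code 0 b0) = K :=
    Set.inter_eq_left.2 fun b _ => h0 b b0
  have hKt : cont code w K ≠ ⊤ := by
    rw [← hKc]
    exact ((cont_cell code w (0, code 0 b0) Set.inter_subset_right).trans_lt (hw 0).lt_top).ne
  have hex : ∀ j : ℕ, ∃ ν : ProbabilityMeasure C, (ν : Measure C) Kᶜ = 0 ∧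
      ∀ l ≤ j, ∀ r, (ν : Measure C) (cell code (l, r)) ≤ (cont code w K)⁻¹ * w l := by
    intro j
    obtain ⟨ν, h1, h2, h3⟩ := exists_fin_depth w hn hfin (fun c => (ho c).measurableSet) hw
      hK.measurableSet j 0 (code 0 b0)
    rw [hKc] at h1 h2
    refine ⟨⟨(cont code w K)⁻¹ • ν, ⟨?_⟩⟩, ?_, ?_⟩
    · simp [h2, ENNReal.inv_mul_cancel hK0 hKt]
    · simp [h1]
    · intro l hl r
      simp only [ProbabilityMeasure.coe_mk, Measure.smul_apply, smul_eq_mul]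
      gcongr
      exact (h3 l (by omega) (by omega) r).trans (cont_cell code w (l,r) Set.inter_subset_right)
  choose ν hν1 hν2 using hex
  obtain ⟨μ, -, hμ⟩ := isCompact_univ.ultrafilter_le_nhds
    (((hyperfilter ℕ).map ν)) (by simp)
  have hlim : Tendsto ν (hyperfilter ℕ : Filter ℕ) (𝓝 μ) := hμ
  refine ⟨μ, inferInstance, ?_, ?_⟩
  · refine le_antisymm ?_ zero_le
    refine (ProbabilityMeasure.le_liminf_measure_open_of_tendsto hlim hK.isClosed.isOpen_compl).trans ?_
    simp [hν1]
  · intro k q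
    refine (ProbabilityMeasure.le_liminf_measure_open_of_tendsto hlim (ho _)).trans ?_
    have hev : ∀ᶠ i in (hyperfilter ℕ : Filter ℕ), (ν i : Measure C) (cell code (k,q)) ≤ (cont code w K)⁻¹ * w k := by
      have : ∀ᶠ i in (atTop : Filter ℕ), (ν i : Measure C) (cell code (k,q)) ≤ (cont code w K)⁻¹ * w k := by
        filter_upwards [eventually_ge_atTop k] with i hi
        exact hν2 i k hi q
      exact (Nat.hyperfilter_le_atTop) this
    refine (liminf_le_liminf hev).trans ?_
    simp
end limitm

section push
variable {C ι X : Type*} [TopologicalSpace C] [CompactSpace C] [PolishSpace C] [HasOuterApproxClosed C]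
  [MeasurableSpace C] [BorelSpace C] [Countable ι] {code : ℕ → C → ι}
  [MetricSpace X] [MeasurableSpace X] [BorelSpace X]

lemma frostman_abs (hn : Nested code) (h0 : ∀ b b', code 0 b = code 0 b')
    (hfin : ∀ k, (Set.range (code k)).Finite)
    (ho : ∀ c, IsOpen (cell code c)) (ψ : C → X) (hψ : Continuous ψ)
    (hd : ∀ c, Metric.ediam (ψ '' cell code c) ≤ ENNReal.ofReal ((1/2) ^ c.1)) {α : ℝ} (hα : 0 < α)
    {A : Set X} (hA : AnalyticSet A) (hAr : A ⊆ Set.range ψ) (hpos : μH[α] A ≠ 0) :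
    ∃ (ν : Measure C) (D : ℝ≥0∞) (K : Set X), IsProbabilityMeasure ν ∧ D ≠ ⊤ ∧ IsCompact K ∧ K ⊆ A ∧
      ν (ψ ⁻¹' K)ᶜ = 0 ∧
      ∀ k q, ν (cell code (k,q)) ≤ D * ENNReal.ofReal ((1/2) ^ k) ^ α := by
  set w : ℕ → ℝ≥0∞ := fun k => ENNReal.ofReal ((1/2) ^ k) ^ α with hw
  have hwt : ∀ k, w k ≠ ⊤ := fun k => by simp [hw, hα.le]
  have hwanti : Antitone w := by
    intro a b hab
    simp only [hw]
    gcongr ?_ ^ α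
    apply ENNReal.ofReal_le_ofReal
    exact pow_le_pow_of_le_one (by norm_num) (by norm_num) hab
  have hw0 : ∀ k, 0 < w k := fun k => by
    simp only [hw]
    exact ENNReal.rpow_pos (by simp) (by simp)
  have hr : Tendsto (fun n : ℕ => ENNReal.ofReal ((1/2) ^ n)) atTop (𝓝 0) := by
    rw [← ENNReal.ofReal_zero]
    exact ENNReal.tendsto_ofReal (tendsto_pow_atTop_nhds_zero_of_lt_one (by norm_num) (by norm_num))
  have hwlim : Tendsto w atTop (𝓝 0) := by
    have := (ENNReal.continuous_rpow_const (y := α)).tendsto 0 |>.comp hr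
    simpa [ENNReal.zero_rpow_of_pos hα, hw, Function.comp_def] using this
  -- positivity of content
  have hcont : cont code w (ψ ⁻¹' A) ≠ 0 := by
    intro hz
    apply hpos
    have hex : ∀ n, ∃ S, Covers code S (ψ ⁻¹' A) ∧ cost w S < w n := fun n =>
      cont_lt_exists code w (hz ▸ hw0 n)
    choose S hS hSc using hex
    have hlev : ∀ n, ∀ c ∈ S n, n ≤ c.1 := by
      intro n c hc
      by_contra hlt
      push Not at hlt
      have h1 : w c.1 ≤ cost w (S n) := by
        have := ENNReal.le_tsum (f := (S n).indicator (fun c => w c.1)) c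
        simpa [hc, cost] using this
      exact absurd (hwanti hlt.le) (not_le.2 (h1.trans_lt (hSc n)))
    refine le_antisymm ?_ zero_le
    refine (Measure.hausdorffMeasure_le_liminf_tsum α A
      (fun n : ℕ => ENNReal.ofReal ((1/2) ^ n)) hr
      (fun n (c : S n) => ψ '' cell code c.1) ?_ ?_).trans ?_
    · refine Eventually.of_forall fun n c => (hd c.1).trans ?_
      apply ENNReal.ofReal_le_ofReal
      exact pow_le_pow_of_le_one (by norm_num) (by norm_num) (hlev n c.1 c.2)
    · refine Eventually.of_forall fun n x hx => ?_
      obtain ⟨b, rfl⟩ := hAr hx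
      obtain ⟨c, hc, hbc⟩ := hS n b hx
      exact Set.mem_iUnion.2 ⟨⟨c, hc⟩, b, hbc, rfl⟩
    · have : ∀ n, ∑' c : S n, Metric.ediam (ψ '' cell code c.1) ^ α ≤ w n := by
        intro n
        refine le_trans ?_ (hSc n).le
        unfold cost
        rw [← tsum_subtype (S n) (fun c : ℕ × ι => w c.1)]
        refine ENNReal.tsum_le_tsum fun c => ?_
        exact ENNReal.rpow_le_rpow (hd c.1) hα.le
      refine (liminf_le_liminf (Eventually.of_forall this)).trans ?_
      rw [hwlim.liminf_eq]
  -- compact subset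
  have hAn : AnalyticSet (ψ ⁻¹' A) := hA.preimage hψ
  rw [AnalyticSet] at hAn
  rcases hAn with he | ⟨f, hf, hfr⟩
  · rw [he, cont_empty] at hcont; exact absurd rfl hcont
  rw [← hfr] at hcont
  obtain ⟨x, hx0, hx⟩ := exists_between (pos_iff_ne_zero.2 hcont)
  obtain ⟨K, hKr, hKc, hxK⟩ := exists_compact w hn ho f hf hx
  have hK0 : cont code w K ≠ 0 := (hx0.trans_le hxK).ne'
  obtain ⟨ν, hp, h1, h2⟩ := exists_limit w hn h0 hfin ho hwt hKc hK0
  refine ⟨ν, (cont code w K)⁻¹, ψ '' K, hp, by simp [hK0], hKc.image hψ, ?_, ?_, h2⟩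
  · rintro _ ⟨b, hb, rfl⟩
    have := hKr hb
    rw [hfr] at this
    exact this
  · exact measure_mono_null (Set.compl_subset_compl.2 (Set.subset_preimage_image _ _)) h1
end push
end Fro
end PartB3

section PartB4
open Real MeasureTheory Filter Topology
open scoped ENNReal

namespace Fro
def Nk : ℕ → (ℕ → Fin 2) → ℕ
  | 0, _ => 0
  | k+1, b => 2 * Nk k b + (b k : ℕ)

lemma Nk_sum (k : ℕ) (b : ℕ → Fin 2) :
    ∑ i ∈ Finset.range k, Real.ofDigitsTerm b i = Nk k b / 2 ^ k := by
  induction k with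
  | zero => simp [Nk]
  | succ k ih =>
    rw [Finset.sum_range_succ, ih]
    simp only [Nk, Real.ofDigitsTerm]
    push_cast
    field_simp
    ring

lemma od_bounds (k : ℕ) (b : ℕ → Fin 2) :
    (Nk k b : ℝ) / 2 ^ k ≤ Real.ofDigits b ∧ Real.ofDigits b ≤ (Nk k b + 1) / 2 ^ k := by
  rw [Real.ofDigits_eq_sum_add_ofDigits b k, Nk_sum]
  have h1 := Real.ofDigits_nonneg (fun i => b (i + k))
  have h2 := Real.ofDigits_le_one (fun i => b (i + k))
  have h3 : (0:ℝ) < ((2:ℕ):ℝ)^k := by positivity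
  constructor
  · have : 0 ≤ (((2:ℕ):ℝ) ^ k)⁻¹ * Real.ofDigits (fun i => b (i + k)) := by positivity
    linarith
  · rw [add_div]
    have : (((2:ℕ):ℝ) ^ k)⁻¹ * Real.ofDigits (fun i => b (i + k)) ≤ (((2:ℕ):ℝ) ^ k)⁻¹ * 1 := by
      gcongr
    push_cast at this ⊢
    rw [one_div]
    linarith

lemma Nk_lt (k : ℕ) (b : ℕ → Fin 2) : Nk k b < 2 ^ k := by
  induction k with
  | zero => simp [Nk]
  | succ k ih =>
    have := (b k).2
    simp only [Nk, pow_succ]; omega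

lemma Nk_nest (k : ℕ) (b b' : ℕ → Fin 2) (h : Nk (k+1) b = Nk (k+1) b') : Nk k b = Nk k b' := by
  have := (b k).2
  have := (b' k).2
  simp only [Nk] at h; omega

lemma Nk_cont (k : ℕ) : Continuous (Nk k) := by
  induction k with
  | zero => exact continuous_const
  | succ k ih =>
    have h1 : Continuous (fun b : ℕ → Fin 2 => ((b k : Fin 2) : ℕ)) :=
      (continuous_of_discreteTopology (f := fun x : Fin 2 => (x : ℕ))).comp (continuous_apply k)
    exact (continuous_const.mul ih).add h1

abbrev CC := ((ℕ → Fin 2) × (ℕ → Fin 2)) × (ℕ → Fin 2)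

def cod (k : ℕ) (b : CC) : (ℕ × ℕ) × ℕ := ((Nk k b.1.1, Nk k b.1.2), Nk k b.2)

noncomputable def psi (p : Heis) (b : CC) : Heis :=
  ((p.1.1 + Real.ofDigits b.1.1, p.1.2 + Real.ofDigits b.1.2), p.2 + Real.ofDigits b.2)

lemma psi_cont (p : Heis) : Continuous (psi p) := by
  have := Real.continuous_ofDigits (b := 2)
  unfold psi
  fun_prop

lemma dist_aux {k n : ℕ} {x y : ℝ} (hx : (n : ℝ) / 2 ^ k ≤ x ∧ x ≤ (n+1) / 2^k)
    (hy : (n : ℝ) / 2 ^ k ≤ y ∧ y ≤ (n+1) / 2^k) (c : ℝ) : dist (c + x) (c + y) ≤ (1/2)^k := by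
  rw [Real.dist_eq, abs_le, one_div, inv_pow]
  rw [add_div, one_div] at hx hy
  constructor <;> linarith [hx.1, hx.2, hy.1, hy.2]

lemma near_aux {k n : ℕ} {x c v r : ℝ} (hx : (n : ℝ) / 2 ^ k ≤ x ∧ x ≤ (n+1) / 2^k)
    (hr : r ≤ (1/2)^k) (hd : dist (c + x) v ≤ r) :
    n ∈ Finset.Icc ⌊(v - c) * 2 ^ k - 2⌋₊ (⌊(v - c) * 2 ^ k - 2⌋₊ + 3) := by
  rw [Real.dist_eq] at hd
  have hd := abs_le.1 (hd.trans hr)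
  have h2 : (0:ℝ) < 2 ^ k := by positivity
  rw [one_div, inv_pow] at hd
  rw [div_le_iff₀ h2, le_div_iff₀ h2] at hx
  have e : ((2:ℝ)^k)⁻¹ * 2 ^ k = 1 := inv_mul_cancel₀ h2.ne'
  have h3 : (-(2 ^ k)⁻¹) * 2 ^ k ≤ (c + x - v) * (2:ℝ) ^ k := mul_le_mul_of_nonneg_right hd.1 h2.le
  have h4 : (c + x - v) * (2:ℝ) ^ k ≤ (2 ^ k)⁻¹ * 2 ^ k := mul_le_mul_of_nonneg_right hd.2 h2.le
  have e2 : (c + x - v) * (2:ℝ) ^ k = x * 2 ^ k - (v - c) * 2 ^ k := by ring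
  rw [e2] at h3 h4
  rw [Finset.mem_Icc]
  constructor
  · apply Nat.floor_le_of_le
    linarith
  · have := Nat.lt_floor_add_one ((v - c) * 2 ^ k - 2)
    have : (n : ℝ) < ⌊(v - c) * 2 ^ k - 2⌋₊ + 4 := by linarith
    have : n < ⌊(v - c) * 2 ^ k - 2⌋₊ + 4 := by exact_mod_cast this
    omega

theorem frostman (p : Heis) {A : Set Heis} (hA : AnalyticSet A)
    (hAp : ∀ v ∈ A, v.1.1 ∈ Set.Icc p.1.1 (p.1.1+1) ∧ v.1.2 ∈ Set.Icc p.1.2 (p.1.2+1) ∧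
      v.2 ∈ Set.Icc p.2 (p.2+1)) {α : ℝ} (hα : 0 < α) (hpos : μH[α] A ≠ 0) :
    ∃ (μ : Measure Heis) (D : ℝ) (K : Set Heis), IsProbabilityMeasure μ ∧ 0 < D ∧ IsCompact K ∧ K ⊆ A ∧
      μ Kᶜ = 0 ∧ ∀ v r, 0 < r → μ (Metric.closedBall v r) ≤ ENNReal.ofReal (D * r ^ α) := by
  letI : MeasurableSpace CC := borel CC
  haveI : BorelSpace CC := ⟨rfl⟩
  haveI : SecondCountableTopology (ℕ → Fin 2) := inferInstance
  haveI : SecondCountableTopology CC := inferInstance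
  haveI : TopologicalSpace.IsCompletelyMetrizableSpace CC := inferInstance
  haveI : PolishSpace CC := inferInstance
  have hn : Nested cod := by
    intro k b b' h
    simp only [cod, Prod.mk.injEq] at h ⊢
    exact ⟨⟨Nk_nest _ _ _ h.1.1, Nk_nest _ _ _ h.1.2⟩, Nk_nest _ _ _ h.2⟩
  have h0 : ∀ b b', cod 0 b = cod 0 b' := fun b b' => rfl
  have hfin : ∀ k, (Set.range (cod k)).Finite := by
    intro k
    refine (((Set.finite_Iio (2^k)).prod (Set.finite_Iio (2^k))).prod (Set.finite_Iio (2^k))).subset ?_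
    rintro _ ⟨b, rfl⟩
    exact ⟨⟨Nk_lt _ _, Nk_lt _ _⟩, Nk_lt _ _⟩
  have hcc : ∀ k, Continuous (cod k) := by
    intro k
    have := Nk_cont k
    unfold cod
    fun_prop
  have ho : ∀ c, IsOpen (cell cod c) := fun c =>
    (isOpen_discrete ({c.2} : Set ((ℕ × ℕ) × ℕ))).preimage (hcc c.1)
  have hψ := psi_cont p
  have hd : ∀ c, Metric.ediam (psi p '' cell cod c) ≤ ENNReal.ofReal ((1/2) ^ c.1) := by
    rintro ⟨k, q⟩
    refine Metric.ediam_le ?_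
    rintro _ ⟨b, hb, rfl⟩ _ ⟨b', hb', rfl⟩
    have hb1 : cod k b = q := hb
    have hb2 : cod k b' = q := hb'
    rw [← hb2] at hb1
    simp only [cod, Prod.mk.injEq] at hb1
    rw [edist_dist]
    apply ENNReal.ofReal_le_ofReal
    simp only [psi, Prod.dist_eq]
    refine max_le (max_le ?_ ?_) ?_
    · refine dist_aux (od_bounds k _) ?_ _
      rw [hb1.1.1]; exact od_bounds k _
    · refine dist_aux (od_bounds k _) ?_ _
      rw [hb1.1.2]; exact od_bounds k _
    · refine dist_aux (od_bounds k _) ?_ _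
      rw [hb1.2]; exact od_bounds k _
  have hAr : A ⊆ Set.range (psi p) := by
    intro v hv
    obtain ⟨h1, h2, h3⟩ := hAp v hv
    have hs := Real.ofDigits_SurjOn (b := 2) (by norm_num)
    obtain ⟨b1, -, e1⟩ := hs (show v.1.1 - p.1.1 ∈ Set.Icc (0:ℝ) 1 from ⟨by linarith [h1.1], by linarith [h1.2]⟩)
    obtain ⟨b2, -, e2⟩ := hs (show v.1.2 - p.1.2 ∈ Set.Icc (0:ℝ) 1 from ⟨by linarith [h2.1], by linarith [h2.2]⟩)
    obtain ⟨b3, -, e3⟩ := hs (show v.2 - p.2 ∈ Set.Icc (0:ℝ) 1 from ⟨by linarith [h3.1], by linarith [h3.2]⟩)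
    refine ⟨((b1, b2), b3), ?_⟩
    simp only [psi, e1, e2, e3]
    ext <;> simp
  obtain ⟨ν, D, K, hp, hD, hK, hKA, hν1, hν2⟩ := frostman_abs hn h0 hfin ho (psi p) hψ hd hα hA hAr hpos
  have hmeas : Measurable (psi p) := hψ.measurable
  refine ⟨ν.map (psi p), 64 * D.toReal * 2 ^ α + 1, K, Measure.isProbabilityMeasure_map hmeas.aemeasurable,
    by positivity, hK, hKA, ?_, ?_⟩
  · rw [Measure.map_apply hmeas hK.measurableSet.compl]
    exact hν1
  intro v r hr
  rw [Measure.map_apply hmeas Metric.isClosed_closedBall.measurableSet]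
  have hr0 : 0 ≤ r ^ α := (Real.rpow_pos_of_pos hr α).le
  have hD0 : 0 ≤ D.toReal := ENNReal.toReal_nonneg
  rcases le_or_gt 1 r with h1 | h1
  · refine prob_le_one.trans ?_
    rw [← ENNReal.ofReal_one]
    apply ENNReal.ofReal_le_ofReal
    have : 1 ≤ r ^ α := Real.one_le_rpow h1 hα.le
    have : 0 ≤ 64 * D.toReal * 2 ^ α * r ^ α := by positivity
    linarith
  · obtain ⟨k, hk1, hk2⟩ := exists_nat_pow_near_of_lt_one hr h1.le (y := (1/2:ℝ)) (by norm_num) (by norm_num)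
    let I : ℝ → ℝ → Finset ℕ := fun v c => Finset.Icc ⌊(v - c) * 2 ^ k - 2⌋₊ (⌊(v - c) * 2 ^ k - 2⌋₊ + 3)
    have hI : ∀ v c, (I v c).card = 4 := fun v c => by simp [I]; omega
    let F := ((I v.1.1 p.1.1) ×ˢ (I v.1.2 p.1.2)) ×ˢ (I v.2 p.2)
    have hsub : psi p ⁻¹' Metric.closedBall v r ⊆ ⋃ q ∈ F, cell cod (k, q) := by
      intro b hb
      refine Set.mem_biUnion (x := cod k b) ?_ rfl
      simp only [Set.mem_preimage, Metric.mem_closedBall, psi, Prod.dist_eq, max_le_iff] at hb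
      simp only [F, Finset.coe_product, Set.mem_prod, Finset.mem_coe, cod]
      exact ⟨⟨near_aux (od_bounds k _) hk2 hb.1.1, near_aux (od_bounds k _) hk2 hb.1.2⟩,
        near_aux (od_bounds k _) hk2 hb.2⟩
    calc ν (psi p ⁻¹' Metric.closedBall v r) ≤ ν (⋃ q ∈ F, cell cod (k, q)) := measure_mono hsub
      _ ≤ ∑ q ∈ F, ν (cell cod (k,q)) := measure_biUnion_finset_le _ _
      _ ≤ ∑ q ∈ F, D * ENNReal.ofReal ((1/2) ^ k) ^ α := Finset.sum_le_sum fun q _ => hν2 k q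
      _ = 64 * (D * ENNReal.ofReal ((1/2) ^ k) ^ α) := by
        simp [F, Finset.card_product, hI]
      _ = ENNReal.ofReal (64 * D.toReal * ((1/2)^k) ^ α) := by
        rw [ENNReal.ofReal_mul (by positivity), ENNReal.ofReal_mul (by positivity), ENNReal.ofReal_toReal hD,
          ENNReal.ofReal_rpow_of_pos (by positivity)]
        simp [mul_assoc]
      _ ≤ _ := by
        apply ENNReal.ofReal_le_ofReal
        have h3 : ((1/2:ℝ)^k) ^ α ≤ (2 * r) ^ α := by
          apply Real.rpow_le_rpow (by positivity) _ hα.le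
          rw [pow_succ] at hk1; linarith
        rw [Real.mul_rpow (by norm_num) hr.le] at h3
        calc _ ≤ 64 * D.toReal * (2 ^ α * r ^ α) := by gcongr
          _ ≤ _ := by rw [add_mul, one_mul, mul_assoc (64 * D.toReal)]; linarith
end Fro
end PartB4

section PartA1
open Real MeasureTheory Filter Topology
open scoped ENNReal

namespace HD

/-- twisted vertical difference -/
noncomputable def TT (v w : Heis) : ℝ := v.2 - w.2 - 2 * (v.1.1 * w.1.2 - v.1.2 * w.1.1)

lemma dH_le_iff {v w : Heis} {c : ℝ} (hc : 0 ≤ c) : dH v w ≤ c ↔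
    ((v.1.1 - w.1.1)^2 + (v.1.2 - w.1.2)^2)^2 + (TT v w)^2 ≤ c^4 := by
  have e : dH v w = (((v.1.1 - w.1.1)^2 + (v.1.2 - w.1.2)^2)^2 + (TT v w)^2) ^ ((1:ℝ)/4) := by
    unfold dH nrm wedge TT
    have : ∀ x : ℝ, 0 ≤ x → (Real.sqrt x)^4 = x^2 := fun x hx => by
      rw [show 4 = 2 * 2 from rfl, pow_mul, Real.sq_sqrt hx]
    rw [this _ (by positivity)]
    simp
  rw [e]
  set X := ((v.1.1 - w.1.1)^2 + (v.1.2 - w.1.2)^2)^2 + (TT v w)^2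
  have hX : 0 ≤ X := by positivity
  rw [one_div, Real.rpow_inv_le_iff_of_pos hX hc (by norm_num)]
  norm_cast

lemma dH_nonneg (v w : Heis) : 0 ≤ dH v w := by
  unfold dH nrm; positivity

lemma ediamK_empty : ediamK ∅ = 0 := by simp [ediamK]

lemma ediamK_le {S : Set Heis} {c : ℝ} (h : ∀ v ∈ S, ∀ w ∈ S, dH v w ≤ c) :
    ediamK S ≤ ENNReal.ofReal c := by
  unfold ediamK
  exact iSup₂_le fun v hv => iSup₂_le fun w hw => ENNReal.ofReal_le_ofReal (h v hv w hw)

lemma le_ediamK {S : Set Heis} {v w : Heis} (hv : v ∈ S) (hw : w ∈ S) :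
    ENNReal.ofReal (dH v w) ≤ ediamK S := by
  unfold ediamK
  exact le_iSup₂_of_le v hv (le_iSup₂_of_le w hw le_rfl)

lemma hMeasK_zero_of {p : ℝ} (hp : 0 < p) {A : Set Heis}
    (h : ∀ δ : ℝ, 0 < δ → ∀ ε : ℝ≥0∞, ε ≠ 0 → ∃ (κ : Type) (_ : Encodable κ) (t : κ → Set Heis),
      A ⊆ ⋃ i, t i ∧ (∀ i, ediamK (t i) ≤ ENNReal.ofReal δ) ∧ ∑' i, ediamK (t i) ^ p ≤ ε) :
    hMeasK p A = 0 := by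
  refine le_antisymm ?_ zero_le
  unfold hMeasK
  refine iSup₂_le fun δ hδ => ?_
  refine le_of_forall_gt fun ε hε => ?_
  obtain ⟨ε', h1, h2⟩ := exists_between hε
  obtain ⟨κ, _, t, ht1, ht2, ht3⟩ := h δ hδ ε' h1.ne'
  refine lt_of_le_of_lt ?_ h2
  refine iInf_le_of_le (fun n => ⋃ b ∈ Encodable.decode₂ κ n, t b) (iInf_le_of_le ?_ (iInf_le_of_le ?_ ?_))
  · rw [Encodable.iUnion_decode₂]; exact ht1
  · intro n
    exact Encodable.iUnion_decode₂_cases (C := fun s => ediamK s ≤ ENNReal.ofReal δ)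
      (by rw [ediamK_empty]; exact zero_le) ht2
  · rw [tsum_iUnion_decode₂ (fun s => ediamK s ^ p) (by simp [ediamK_empty, hp])]
    exact ht3

lemma hMeasK_zero_exists {p : ℝ} {A : Set Heis} (h : hMeasK p A = 0) {δ : ℝ} (hδ : 0 < δ)
    {ε : ℝ≥0∞} (hε : ε ≠ 0) : ∃ t : ℕ → Set Heis, A ⊆ ⋃ i, t i ∧
      (∀ i, ediamK (t i) ≤ ENNReal.ofReal δ) ∧ ∑' i, ediamK (t i) ^ p < ε := by
  have h1 : ⨅ (t : ℕ → Set Heis) (_ : A ⊆ ⋃ n, t n)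
      (_ : ∀ n, ediamK (t n) ≤ ENNReal.ofReal δ), ∑' n, ediamK (t n) ^ p < ε := by
    refine lt_of_le_of_lt ?_ (pos_iff_ne_zero.2 hε)
    rw [← h]
    unfold hMeasK
    exact le_iSup₂ (f := fun (δ : ℝ) (_ : 0 < δ) => ⨅ (t : ℕ → Set Heis) (_ : A ⊆ ⋃ n, t n)
      (_ : ∀ n, ediamK (t n) ≤ ENNReal.ofReal δ), ∑' n, ediamK (t n) ^ p) δ hδ
  simp only [iInf_lt_iff] at h1
  obtain ⟨t, a, b, c⟩ := h1
  exact ⟨t, a, b, c⟩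

lemma hMeasK_iUnion {p : ℝ} (hp : 0 < p) {A : ℕ → Set Heis} (h : ∀ i, hMeasK p (A i) = 0) :
    hMeasK p (⋃ i, A i) = 0 := by
  refine hMeasK_zero_of hp fun δ hδ ε hε => ?_
  obtain ⟨e, he0, hes⟩ := ENNReal.exists_pos_sum_of_countable hε ℕ
  have : ∀ i, ∃ t : ℕ → Set Heis, A i ⊆ ⋃ j, t j ∧
      (∀ j, ediamK (t j) ≤ ENNReal.ofReal δ) ∧ ∑' j, ediamK (t j) ^ p < e i := fun i =>
    hMeasK_zero_exists (h i) hδ (by simpa using (he0 i).ne')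
  choose t h1 h2 h3 using this
  refine ⟨Σ _ : ℕ, ℕ, inferInstance, fun x => t x.1 x.2, ?_, fun x => h2 _ _, ?_⟩
  · refine Set.iUnion_subset fun i v hv => ?_
    obtain ⟨j, hj⟩ := Set.mem_iUnion.1 (h1 i hv)
    exact Set.mem_iUnion.2 ⟨⟨i, j⟩, hj⟩
  · rw [ENNReal.tsum_sigma' (fun x : Σ _ : ℕ, ℕ => ediamK (t x.1 x.2) ^ p)]
    exact (ENNReal.tsum_le_tsum fun i => (h3 i).le).trans hes.le

/-- pointwise slice estimate -/
lemma slice_est {v v' w0 : Heis} {r : ℝ} (hr : 0 < r) (h1 : dist v w0 ≤ r) (h2 : dist v' w0 ≤ r)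
    (h3 : dist v v' ≤ r) (h4 : |TT v w0 - TT v' w0| ≤ r^2) : dH v v' ≤ 3 * r := by
  rw [dH_le_iff (by positivity)]
  simp only [Prod.dist_eq, max_le_iff, Real.dist_eq] at h1 h2 h3
  obtain ⟨⟨a1, a2⟩, a3⟩ := h1
  obtain ⟨⟨b1, b2⟩, b3⟩ := h2
  obtain ⟨⟨c1, c2⟩, c3⟩ := h3
  have e : TT v v' = (TT v w0 - TT v' w0) - 2 * ((v.1.1 - w0.1.1) * (v'.1.2 - w0.1.2))
      + 2 * ((v.1.2 - w0.1.2) * (v'.1.1 - w0.1.1)) := by unfold TT; ring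
  have m : ∀ x y : ℝ, |x| ≤ r → |y| ≤ r → |x * y| ≤ r^2 := fun x y hx hy => by
    rw [abs_mul, sq]; exact mul_le_mul hx hy (abs_nonneg _) hr.le
  have m1 := abs_le.1 (m _ _ a1 b2)
  have m2 := abs_le.1 (m _ _ a2 b1)
  have h4 := abs_le.1 h4
  have hT : |TT v v'| ≤ 5 * r^2 := by
    rw [e, abs_le]; constructor <;> linarith [m1.1, m1.2, m2.1, m2.2, h4.1, h4.2]
  have hT2 : (TT v v')^2 ≤ (5 * r^2)^2 := sq_le_sq' (abs_le.1 hT).1 (abs_le.1 hT).2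
  have q1 : (v.1.1 - v'.1.1)^2 ≤ r^2 := sq_le_sq' (abs_le.1 c1).1 (abs_le.1 c1).2
  have q2 : (v.1.2 - v'.1.2)^2 ≤ r^2 := sq_le_sq' (abs_le.1 c2).1 (abs_le.1 c2).2
  have q3 : ((v.1.1 - v'.1.1)^2 + (v.1.2 - v'.1.2)^2)^2 ≤ (2*r^2)^2 := by
    apply pow_le_pow_left₀ (by positivity); linarith
  have : 0 ≤ r^4 := by positivity
  nlinarith

lemma TT_bound {v w0 : Heis} {r R : ℝ} (hR : |w0.1.1| ≤ R ∧ |w0.1.2| ≤ R)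
    (h1 : dist v w0 ≤ r) : |TT v w0| ≤ (1 + 4 * R) * r := by
  simp only [Prod.dist_eq, max_le_iff, Real.dist_eq] at h1
  obtain ⟨⟨a1, a2⟩, a3⟩ := h1
  have e : TT v w0 = (v.2 - w0.2) - 2 * ((v.1.1 - w0.1.1) * w0.1.2) + 2 * ((v.1.2 - w0.1.2) * w0.1.1) := by
    unfold TT; ring
  have hr : 0 ≤ r := (abs_nonneg _).trans a1
  have m : ∀ x y : ℝ, |x| ≤ r → |y| ≤ R → |x * y| ≤ r * R := fun x y hx hy => by
    rw [abs_mul]; exact mul_le_mul hx hy (abs_nonneg _) hr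
  have m1 := abs_le.1 (m _ _ a1 hR.2)
  have m2 := abs_le.1 (m _ _ a2 hR.1)
  have a3 := abs_le.1 a3
  rw [e, abs_le]
  constructor <;> linarith [m1.1, m1.2, m2.1, m2.2, a3.1, a3.2]

lemma null_bdd {α : ℝ} (hα : 0 < α) {A : Set Heis} {R : ℝ} (hR : 0 ≤ R)
    (hA : ∀ v ∈ A, |v.1.1| ≤ R ∧ |v.1.2| ≤ R) (h0 : μH[α] A = 0) : hMeasK (α + 1) A = 0 := by
  classical
  refine hMeasK_zero_of (by linarith) fun δ hδ ε hε => ?_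
  set D : ℝ := 1 + 4 * R with hD
  have hDpos : 0 < D := by positivity
  set δ0 : ℝ := min (δ/3) 1 with hδ0
  have hδ0pos : 0 < δ0 := by positivity
  set c : ℝ := (2 * D + 1) * 3 ^ (α + 1) with hc
  have hcpos : 0 < c := by positivity
  -- small epsilon
  set ε1 : ℝ≥0∞ := min (ε / (2 * ENNReal.ofReal c)) (ENNReal.ofReal δ0 ^ α) with hε1
  have hε1pos : ε1 ≠ 0 := by
    rw [hε1]
    refine (lt_min ?_ ?_).ne'
    · exact ENNReal.div_pos hε (by finiteness)
    · exact ENNReal.rpow_pos (by simpa using hδ0pos) (by simp)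
  obtain ⟨e, he0, hes⟩ := ENNReal.exists_pos_sum_of_countable hε1pos ℕ
  have hcov : ∃ t : ℕ → Set Heis, A ⊆ ⋃ n, t n ∧ (∀ n, Metric.ediam (t n) ≤ ENNReal.ofReal δ0) ∧
      ∑' n, ⨆ _ : (t n).Nonempty, Metric.ediam (t n) ^ α < ε1 := by
    rw [Measure.hausdorffMeasure_apply] at h0
    have h1 : ⨅ (t : ℕ → Set Heis) (_ : A ⊆ ⋃ n, t n) (_ : ∀ n, Metric.ediam (t n) ≤ ENNReal.ofReal δ0),
        ∑' n, ⨆ _ : (t n).Nonempty, Metric.ediam (t n) ^ α < ε1 := by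
      refine lt_of_le_of_lt ?_ (pos_iff_ne_zero.2 hε1pos)
      rw [← h0]
      exact le_iSup₂ (f := fun (r : ℝ≥0∞) (_ : 0 < r) => ⨅ (t : ℕ → Set Heis) (_ : A ⊆ ⋃ n, t n)
        (_ : ∀ n, Metric.ediam (t n) ≤ r), ∑' n, ⨆ _ : (t n).Nonempty, Metric.ediam (t n) ^ α)
        (ENNReal.ofReal δ0) (by simpa using hδ0pos)
    simp only [iInf_lt_iff] at h1
    obtain ⟨t, a, b, c⟩ := h1
    exact ⟨t, a, b, c⟩
  obtain ⟨t, ht1, ht2, ht3⟩ := hcov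
  -- radii
  let r : ℕ → ℝ := fun n => max (Metric.ediam (t n)).toReal ((e n : ℝ) ^ (1/α))
  have hdt : ∀ n, Metric.ediam (t n) ≠ ⊤ := fun n => ((ht2 n).trans_lt ENNReal.ofReal_lt_top).ne
  have hr0 : ∀ n, 0 < r n := fun n => lt_max_of_lt_right (Real.rpow_pos_of_pos (he0 n) _)
  have hrδ : ∀ n, r n ≤ δ0 := by
    intro n
    refine max_le (ENNReal.toReal_le_of_le_ofReal hδ0pos.le (ht2 n)) ?_
    have h1 : (e n : ℝ≥0∞) ≤ ENNReal.ofReal δ0 ^ α :=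
      ((ENNReal.le_tsum n).trans hes.le).trans (min_le_right _ _)
    have h2 : (e n : ℝ) ≤ δ0 ^ α := by
      rw [ENNReal.ofReal_rpow_of_pos hδ0pos, ← ENNReal.ofReal_coe_nnreal] at h1
      exact (ENNReal.ofReal_le_ofReal_iff (by positivity)).1 h1
    rw [one_div, Real.rpow_inv_le_iff_of_pos (by positivity) hδ0pos.le hα]
    exact h2
  have hrα : ∀ n, ENNReal.ofReal (r n ^ α) ≤ (⨆ _ : (t n).Nonempty, Metric.ediam (t n) ^ α) + e n := by
    intro n
    have hd : Metric.ediam (t n) ^ α ≤ ⨆ _ : (t n).Nonempty, Metric.ediam (t n) ^ α := by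
      rcases (t n).eq_empty_or_nonempty with h | h
      · simp [h, hα]
      · exact le_iSup (fun _ : (t n).Nonempty => Metric.ediam (t n) ^ α) h
    rcases le_total ((e n : ℝ) ^ (1/α)) (Metric.ediam (t n)).toReal with h | h
    · have : r n = (Metric.ediam (t n)).toReal := max_eq_left h
      refine le_trans ?_ (hd.trans le_self_add)
      rw [← ENNReal.ofReal_rpow_of_pos (hr0 n), this, ENNReal.ofReal_toReal (hdt n)]
    · have : r n = (e n : ℝ) ^ (1/α) := max_eq_right h
      refine le_trans ?_ le_add_self
      rw [this, ← Real.rpow_mul (by positivity), one_div, inv_mul_cancel₀ hα.ne', Real.rpow_one]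
      simp
  have hdist : ∀ n, ∀ v ∈ t n, ∀ v' ∈ t n, dist v v' ≤ r n := by
    intro n v hv v' hv'
    refine le_trans ?_ (le_max_left _ _)
    rw [dist_edist]
    exact ENNReal.toReal_mono (hdt n) (Metric.edist_le_ediam_of_mem hv hv')
  -- base points
  have hbase : ∀ n, ∃ w0 : Heis, (t n ∩ A).Nonempty → w0 ∈ t n ∩ A := by
    intro n
    by_cases h : (t n ∩ A).Nonempty
    · obtain ⟨w, hw⟩ := h; exact ⟨w, fun _ => hw⟩
    · exact ⟨0, fun h' => absurd h' h⟩
  choose w0 hw0 using hbase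
  let M : ℕ → ℕ := fun n => ⌊2 * D / r n⌋₊ + 1
  let ix : ℕ → Heis → ℕ := fun n v => ⌊(TT v (w0 n) + D * r n) / (r n)^2⌋₊
  have hT : ∀ n, ∀ v ∈ t n ∩ A, |TT v (w0 n)| ≤ D * r n := by
    intro n v hv
    have hw := hw0 n ⟨v, hv⟩
    exact TT_bound (hA _ hw.2) (hdist n v hv.1 _ hw.1)
  refine ⟨Σ n : ℕ, Fin (M n), inferInstance, fun x => {v ∈ t x.1 ∩ A | ix x.1 v = x.2}, ?_, ?_, ?_⟩
  · intro v hv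
    obtain ⟨n, hn⟩ := Set.mem_iUnion.1 (ht1 hv)
    have hlt : ix n v < M n := by
      have := abs_le.1 (hT n v ⟨hn, hv⟩)
      refine Nat.lt_succ_of_le (Nat.floor_mono ?_)
      rw [div_le_div_iff₀ (by have := hr0 n; positivity) (hr0 n)]
      have h3 : TT v (w0 n) + D * r n ≤ 2 * D * r n := by linarith
      calc _ ≤ 2 * D * r n * r n := by have := (hr0 n).le; gcongr
        _ = _ := by ring
    exact Set.mem_iUnion.2 ⟨⟨n, ⟨ix n v, hlt⟩⟩, ⟨hn, hv⟩, rfl⟩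
  all_goals
    have hdiam : ∀ x : Σ n : ℕ, Fin (M n),
        ediamK {v ∈ t x.1 ∩ A | ix x.1 v = x.2} ≤ ENNReal.ofReal (3 * r x.1) := by
      rintro ⟨n, i⟩
      refine ediamK_le ?_
      rintro v ⟨hv, hvi⟩ v' ⟨hv', hvi'⟩
      have hw := hw0 n ⟨v, hv⟩
      refine slice_est (hr0 n) (hdist n _ hv.1 _ hw.1) (hdist n _ hv'.1 _ hw.1) (hdist n _ hv.1 _ hv'.1) ?_
      have b1 := abs_le.1 (hT n v hv)
      have b2 := abs_le.1 (hT n v' hv')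
      have hr2 : 0 < (r n)^2 := by have := hr0 n; positivity
      have key : ∀ u, u ∈ t n ∩ A → ix n u = i → (i : ℝ) * (r n)^2 ≤ TT u (w0 n) + D * r n ∧
          TT u (w0 n) + D * r n ≤ ((i : ℝ) + 1) * (r n)^2 := by
        intro u hu hui
        have b := abs_le.1 (hT n u hu)
        have h0 : 0 ≤ (TT u (w0 n) + D * r n) / (r n)^2 := div_nonneg (by linarith) hr2.le
        have f1 := Nat.floor_le h0
        have f2 := (Nat.lt_floor_add_one ((TT u (w0 n) + D * r n) / (r n)^2)).le
        have e1 : ⌊(TT u (w0 n) + D * r n) / (r n)^2⌋₊ = i := hui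
        rw [e1] at f1 f2
        exact ⟨(le_div_iff₀ hr2).1 f1, (div_le_iff₀ hr2).1 f2⟩
      have k1 := key v hv hvi
      have k2 := key v' hv' hvi'
      rw [abs_le]
      constructor <;> linarith [k1.1, k1.2, k2.1, k2.2]
  · intro x
    refine (hdiam x).trans (ENNReal.ofReal_le_ofReal ?_)
    have := (hrδ x.1).trans (min_le_left _ _)
    linarith
  · calc ∑' x : Σ n : ℕ, Fin (M n), ediamK {v ∈ t x.1 ∩ A | ix x.1 v = x.2} ^ (α + 1)
        ≤ ∑' x : Σ n : ℕ, Fin (M n), ENNReal.ofReal (3 * r x.1) ^ (α + 1) :=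
          ENNReal.tsum_le_tsum fun x => ENNReal.rpow_le_rpow (hdiam x) (by linarith)
      _ = ∑' n, (M n : ℝ≥0∞) * ENNReal.ofReal (3 * r n) ^ (α + 1) := by
          rw [ENNReal.tsum_sigma' (fun x : Σ n : ℕ, Fin (M n) => ENNReal.ofReal (3 * r x.1) ^ (α + 1))]
          congr 1; ext n; simp
      _ ≤ ∑' n, ENNReal.ofReal c * ENNReal.ofReal (r n ^ α) := by
          refine ENNReal.tsum_le_tsum fun n => ?_
          have hr := hr0 n
          have hr1 : r n ≤ 1 := (hrδ n).trans (min_le_right _ _)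
          rw [← ENNReal.ofReal_natCast, ENNReal.ofReal_rpow_of_pos (by positivity),
            ← ENNReal.ofReal_mul (by positivity), ← ENNReal.ofReal_mul (by positivity)]
          apply ENNReal.ofReal_le_ofReal
          have hM : (M n : ℝ) ≤ (2 * D + 1) / r n := by
            have := Nat.floor_le (show 0 ≤ 2 * D / r n by positivity)
            simp only [M]; push_cast
            rw [add_div]
            have : 1 ≤ 1 / r n := by rw [le_div_iff₀ hr]; linarith
            linarith
          rw [Real.mul_rpow (by norm_num) hr.le, Real.rpow_add hr, Real.rpow_one]
          calc (M n : ℝ) * (3 ^ (α + 1) * (r n ^ α * r n))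
              ≤ (2 * D + 1) / r n * (3 ^ (α + 1) * (r n ^ α * r n)) := by gcongr
            _ = c * r n ^ α := by rw [hc]; field_simp
      _ ≤ ENNReal.ofReal c * (ε1 + ε1) := by
          rw [ENNReal.tsum_mul_left]
          gcongr
          refine (ENNReal.tsum_le_tsum hrα).trans ?_
          rw [ENNReal.tsum_add]
          exact add_le_add ht3.le hes.le
      _ ≤ ε := by
          rw [← two_mul]
          have : ε1 ≤ ε / (2 * ENNReal.ofReal c) := min_le_left _ _
          calc _ ≤ ENNReal.ofReal c * (2 * (ε / (2 * ENNReal.ofReal c))) := by gcongr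
            _ = (2 * ENNReal.ofReal c) * (ε / (2 * ENNReal.ofReal c)) := by ring
            _ ≤ ε := ENNReal.mul_div_le

lemma null_of_null {α : ℝ} (hα : 0 < α) {A : Set Heis} (h0 : μH[α] A = 0) : hMeasK (α + 1) A = 0 := by
  have : A = ⋃ n : ℕ, A ∩ {v | |v.1.1| ≤ n ∧ |v.1.2| ≤ n} := by
    ext v
    simp only [Set.mem_iUnion, Set.mem_inter_iff]
    constructor
    · intro hv
      obtain ⟨n, hn⟩ := exists_nat_ge (max |v.1.1| |v.1.2|)
      exact ⟨n, hv, (le_max_left _ _).trans hn, (le_max_right _ _).trans hn⟩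
    · rintro ⟨n, hv, _⟩; exact hv
  rw [this]
  refine hMeasK_iUnion (by linarith) fun n => ?_
  exact null_bdd hα (Nat.cast_nonneg n) (fun v hv => hv.2) (measure_mono_null Set.inter_subset_left h0)
end HD
end PartA1

section PartC1
open Real MeasureTheory Filter Topology
open scoped ENNReal

namespace HD

noncomputable def aa (θ : ℝ) (v w : Heis) : ℝ := (v.1.1 - w.1.1) * cos θ + (v.1.2 - w.1.2) * sin θ
noncomputable def bb (θ : ℝ) (v w : Heis) : ℝ := (v.1.2 - w.1.2) * cos θ - (v.1.1 - w.1.1) * sin θ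
noncomputable def AA (θ : ℝ) (v w : Heis) : ℝ := (v.1.1 + w.1.1) * cos θ + (v.1.2 + w.1.2) * sin θ
noncomputable def BB (θ : ℝ) (v w : Heis) : ℝ := (v.1.2 + w.1.2) * cos θ - (v.1.1 + w.1.1) * sin θ
noncomputable def UU (θ : ℝ) (v w : Heis) : ℝ :=
  v.2 - w.2 - (aa θ v w * BB θ v w + bb θ v w * AA θ v w)
noncomputable def rho (v w : Heis) : ℝ := Real.sqrt ((v.1.1 - w.1.1)^2 + (v.1.2 - w.1.2)^2)
def NN (v w : Heis) : ℝ := |v.1.1^2 + v.1.2^2 - (w.1.1^2 + w.1.2^2)|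
def EE (δ θ : ℝ) (v w : Heis) : Prop := |bb θ v w| ≤ δ ∧ |UU θ v w| ≤ δ^2
def Th (δ : ℝ) (v w : Heis) : Set ℝ := {θ ∈ Set.Ico 0 π | EE δ θ v w}

lemma EE_of_dH {δ θ : ℝ} {v w : Heis} (hδ : 0 ≤ δ) (h : dH (PVperp θ v) (PVperp θ w) ≤ δ) :
    EE δ θ v w := by
  rw [dH_le_iff hδ] at h
  have hs := sin_sq_add_cos_sq θ
  have e1 : (((PVperp θ v).1.1 - (PVperp θ w).1.1)^2 + ((PVperp θ v).1.2 - (PVperp θ w).1.2)^2)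
      = bb θ v w ^ 2 := by
    have : (((PVperp θ v).1.1 - (PVperp θ w).1.1)^2 + ((PVperp θ v).1.2 - (PVperp θ w).1.2)^2)
      = bb θ v w ^ 2 * (sin θ ^2 + cos θ ^2) := by
      simp only [PVperp, projVperp, dotP, ieV, bb, Prod.smul_mk, smul_eq_mul]; ring
    rw [this, hs, mul_one]
  have e2 : TT (PVperp θ v) (PVperp θ w) = UU θ v w := by
    simp [TT, PVperp, projVperp, projV, wedge, dotP, ieV, eV, UU, aa, bb, AA, BB]
    have h1 : cos θ ^ 2 = 1 - sin θ ^ 2 := by linarith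
    ring_nf
    simp only [show cos θ ^ 3 = cos θ * cos θ ^ 2 by ring, show cos θ ^ 4 = (cos θ ^ 2)^2 by ring, h1]
    ring
  rw [e1, e2] at h
  have h1 : (bb θ v w)^4 ≤ δ^4 := by nlinarith [sq_nonneg (UU θ v w)]
  have h2 : (UU θ v w)^2 ≤ (δ^2)^2 := by nlinarith [sq_nonneg (bb θ v w ^2)]
  refine ⟨?_, abs_le_of_sq_le_sq h2 (by positivity)⟩
  have h3 : |bb θ v w|^4 ≤ δ^4 := by
    rw [show |bb θ v w|^4 = (|bb θ v w|^2)^2 by ring, sq_abs]; linarith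
  exact le_of_pow_le_pow_left₀ (by norm_num) hδ h3

variable {v w : Heis} {θ δ R : ℝ}

lemma ab_sq (θ : ℝ) (v w : Heis) : aa θ v w ^ 2 + bb θ v w ^ 2 = rho v w ^ 2 := by
  rw [rho, Real.sq_sqrt (by positivity)]
  have hs := sin_sq_add_cos_sq θ
  have : aa θ v w ^ 2 + bb θ v w ^ 2 = ((v.1.1 - w.1.1)^2 + (v.1.2 - w.1.2)^2) * (sin θ ^ 2 + cos θ ^ 2) := by
    unfold aa bb; ring
  rw [this, hs, mul_one]

lemma dot_eq (θ : ℝ) (v w : Heis) : aa θ v w * AA θ v w + bb θ v w * BB θ v w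
    = v.1.1^2 + v.1.2^2 - (w.1.1^2 + w.1.2^2) := by
  have hs := sin_sq_add_cos_sq θ
  have : aa θ v w * AA θ v w + bb θ v w * BB θ v w
    = (v.1.1^2 + v.1.2^2 - (w.1.1^2 + w.1.2^2)) * (sin θ ^ 2 + cos θ ^ 2) := by
    unfold aa bb AA BB; ring
  rw [this, hs, mul_one]

lemma TT_eq (θ : ℝ) (v w : Heis) : TT v w = UU θ v w + 2 * (bb θ v w * AA θ v w) := by
  have hs := sin_sq_add_cos_sq θ
  have : UU θ v w + 2 * (bb θ v w * AA θ v w) = v.2 - w.2 -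
      2 * (v.1.1 * w.1.2 - v.1.2 * w.1.1) * (sin θ ^ 2 + cos θ ^ 2) := by
    unfold UU aa bb AA BB; ring
  rw [this, hs, mul_one]; rfl

lemma rho_nonneg (v w : Heis) : 0 ≤ rho v w := Real.sqrt_nonneg _

lemma abs_a_le (θ : ℝ) (v w : Heis) : |aa θ v w| ≤ rho v w :=
  abs_le_of_sq_le_sq (by nlinarith [ab_sq θ v w, sq_nonneg (bb θ v w)]) (rho_nonneg v w)
lemma abs_b_le (θ : ℝ) (v w : Heis) : |bb θ v w| ≤ rho v w :=
  abs_le_of_sq_le_sq (by nlinarith [ab_sq θ v w, sq_nonneg (aa θ v w)]) (rho_nonneg v w)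

def Bd (R : ℝ) (v : Heis) : Prop := |v.1.1| ≤ R ∧ |v.1.2| ≤ R

lemma lin_bound {x y θ M : ℝ} (hx : |x| ≤ M) (hy : |y| ≤ M) :
    |x * cos θ + y * sin θ| ≤ 2 * M ∧ |y * cos θ - x * sin θ| ≤ 2 * M := by
  have hM : 0 ≤ M := (abs_nonneg _).trans hx
  have m : ∀ a b : ℝ, |a| ≤ M → |b| ≤ 1 → |a * b| ≤ M := fun a b ha hb => by
    rw [abs_mul]; simpa using mul_le_mul ha hb (abs_nonneg _) hM
  have c1 := abs_le.1 (m _ _ hx (abs_cos_le_one θ))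
  have c2 := abs_le.1 (m _ _ hx (abs_sin_le_one θ))
  have c3 := abs_le.1 (m _ _ hy (abs_cos_le_one θ))
  have c4 := abs_le.1 (m _ _ hy (abs_sin_le_one θ))
  constructor <;> rw [abs_le] <;> constructor <;> linarith [c1.1, c1.2, c2.1, c2.2, c3.1, c3.2, c4.1, c4.2]

lemma AB_bound (hv : Bd R v) (hw : Bd R w) (θ : ℝ) : |AA θ v w| ≤ 4 * R ∧ |BB θ v w| ≤ 4 * R := by
  have h1 : |v.1.1 + w.1.1| ≤ 2 * R := (abs_add_le _ _).trans (by linarith [hv.1, hw.1])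
  have h2 : |v.1.2 + w.1.2| ≤ 2 * R := (abs_add_le _ _).trans (by linarith [hv.2, hw.2])
  have := lin_bound (θ := θ) h1 h2
  unfold AA BB
  exact ⟨by linarith [this.1], by linarith [this.2]⟩

lemma mul_bd {x y X Y : ℝ} (hx : |x| ≤ X) (hy : |y| ≤ Y) : |x * y| ≤ X * Y := by
  rw [abs_mul]; exact mul_le_mul hx hy (abs_nonneg _) ((abs_nonneg _).trans hx)

lemma pair0 (hR : 0 ≤ R) (hv : Bd R v) (hw : Bd R w) (hδ : 0 < δ) (hδ1 : δ ≤ 1) (h : EE δ θ v w)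
    (hρ : rho v w ≤ 2 * δ) : |v.2 - w.2| ≤ (1 + 16 * R) * δ := by
  obtain ⟨hA, hB⟩ := AB_bound hv hw θ
  have h1 := abs_le.1 (mul_bd ((abs_a_le θ v w).trans hρ) hB)
  have h2 := abs_le.1 (mul_bd ((abs_b_le θ v w).trans hρ) hA)
  have h3 := abs_le.1 h.2
  have e : v.2 - w.2 = UU θ v w + (aa θ v w * BB θ v w + bb θ v w * AA θ v w) := by unfold UU; ring
  have h4 : δ^2 ≤ δ := by nlinarith
  rw [e, abs_le]
  constructor <;> linarith [h1.1, h1.2, h2.1, h2.2, h3.1, h3.2]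

lemma pair1 (hR : 0 ≤ R) (hv : Bd R v) (hw : Bd R w) (hδ : 0 < δ) (hδ1 : δ ≤ 1) (h : EE δ θ v w)
    (hρ : 2 * δ < rho v w) : |TT v w| ≤ 2 * NN v w + (1 + 8 * R) * δ := by
  obtain ⟨hA, hB⟩ := AB_bound hv hw θ
  have hb2 : bb θ v w ^ 2 ≤ δ ^ 2 := sq_le_sq' (abs_le.1 h.1).1 (abs_le.1 h.1).2
  have hba : |bb θ v w| ≤ |aa θ v w| := by
    apply sq_le_sq.1
    nlinarith [ab_sq θ v w]
  have h1 := abs_le.1 (mul_bd h.1 hB)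
  have haA : |aa θ v w * AA θ v w| ≤ NN v w + 4 * R * δ := by
    have e := dot_eq θ v w
    have h2 := abs_le.1 (le_refl (NN v w))
    rw [abs_le]; constructor <;> linarith [h1.1, h1.2, h2.1, h2.2]
  have hbA : |bb θ v w * AA θ v w| ≤ NN v w + 4 * R * δ := by
    refine le_trans ?_ haA
    rw [abs_mul, abs_mul]
    exact mul_le_mul_of_nonneg_right hba (abs_nonneg _)
  have h3 := abs_le.1 hbA
  have h4 := abs_le.1 h.2
  have h5 : δ^2 ≤ δ := by nlinarith
  rw [TT_eq θ, abs_le]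
  constructor <;> linarith [h3.1, h3.2, h4.1, h4.2]

lemma pair2 {θ' : ℝ} (h : EE δ θ v w) (h' : EE δ θ' v w) (hδ : 0 < δ)
    (hρ : 2 * δ < rho v w) : |sin (θ' - θ)| ≤ 4 * δ / rho v w := by
  have hr : 0 < rho v w := by linarith
  have e : bb θ' v w = bb θ v w * cos (θ' - θ) - aa θ v w * sin (θ' - θ) := by
    have e1 : θ' = θ + (θ' - θ) := by ring
    conv_lhs => rw [e1]
    unfold aa bb; rw [cos_add, sin_add]; ring
  have hb2 : bb θ v w ^ 2 ≤ δ ^ 2 := sq_le_sq' (abs_le.1 h.1).1 (abs_le.1 h.1).2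
  have ha : rho v w / 2 ≤ |aa θ v w| := by
    apply le_of_sq_le_sq _ (abs_nonneg _)
    rw [sq_abs]
    nlinarith [ab_sq θ v w]
  have h1 := abs_le.1 (mul_bd h.1 (abs_cos_le_one (θ' - θ)))
  have h2 := abs_le.1 h'.1
  have h3 : |aa θ v w * sin (θ' - θ)| ≤ 2 * δ := by
    rw [abs_le]; constructor <;> linarith [h1.1, h1.2, h2.1, h2.2]
  rw [le_div_iff₀ hr]
  rw [abs_mul] at h3
  nlinarith [abs_nonneg (sin (θ' - θ))]

lemma pair3 {θ' : ℝ} (hR : 0 < R) (hv : Bd R v) (hw : Bd R w) (h : EE δ θ v w) (h' : EE δ θ' v w) (hδ : 0 < δ)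
    (hρ : 2 * δ < rho v w) (hN : 144 * R * δ ≤ NN v w) : |sin (θ' - θ)| ≤ 4 * δ^2 / NN v w := by
  have hr : 0 < rho v w := by linarith
  have hNpos : 0 < NN v w := by have : 0 < 144 * R * δ := by positivity
                                linarith
  obtain ⟨hA, hB⟩ := AB_bound hv hw θ
  have hs := pair2 h h' hδ hρ
  rw [le_div_iff₀ hr] at hs
  set S := sin (θ' - θ) with hS
  set c := cos (θ' - θ) with hc
  have hcs : S^2 + c^2 = 1 := sin_sq_add_cos_sq _
  -- N ≤ 8 R rho
  have hNρ : NN v w ≤ 8 * R * rho v w := by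
    unfold NN
    rw [← dot_eq θ v w]
    have h1 := abs_le.1 (mul_bd (abs_a_le θ v w) hA)
    have h2 := abs_le.1 (mul_bd (abs_b_le θ v w) hB)
    rw [abs_le]; constructor <;> linarith [h1.1, h1.2, h2.1, h2.2]
  have hS2 : |S| ≤ 1/2 := by
    have h18 : 18 * δ ≤ rho v w := by
      have : R * (144 * δ) ≤ R * (8 * rho v w) := by linarith
      have := le_of_mul_le_mul_left this hR
      linarith
    nlinarith [abs_nonneg S]
  have hc2 : 1/2 ≤ |c| := by
    apply le_of_sq_le_sq _ (abs_nonneg _)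
    rw [sq_abs]
    have : S^2 ≤ (1/2)^2 := by rw [← sq_abs S]; exact pow_le_pow_left₀ (abs_nonneg _) hS2 2
    nlinarith
  set Re := aa θ v w * AA θ v w - bb θ v w * BB θ v w with hRe
  set Im := aa θ v w * BB θ v w + bb θ v w * AA θ v w with hIm
  have e : UU θ' v w - UU θ v w = 2 * (S * (Im * S + Re * c)) := by
    have e1 : θ' = θ + (θ' - θ) := by ring
    have e2 : aa θ' v w = aa θ v w * c + bb θ v w * S := by
      conv_lhs => rw [e1]
      unfold aa bb; rw [cos_add, sin_add]; ring
    have e3 : bb θ' v w = bb θ v w * c - aa θ v w * S := by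
      conv_lhs => rw [e1]
      unfold aa bb; rw [cos_add, sin_add]; ring
    have e4 : AA θ' v w = AA θ v w * c + BB θ v w * S := by
      conv_lhs => rw [e1]
      unfold AA BB; rw [cos_add, sin_add]; ring
    have e5 : BB θ' v w = BB θ v w * c - AA θ v w * S := by
      conv_lhs => rw [e1]
      unfold AA BB; rw [cos_add, sin_add]; ring
    unfold UU
    rw [e2, e3, e4, e5, hRe, hIm]
    have : c^2 = 1 - S^2 := by linarith
    ring_nf
    rw [this]; ring
  have hprod : |S| * |Im * S + Re * c| ≤ δ^2 := by
    rw [← abs_mul]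
    have h1 := abs_le.1 h.2
    have h2 := abs_le.1 h'.2
    rw [abs_le]; constructor <;> linarith [h1.1, h1.2, h2.1, h2.2]
  have hImS : |Im * S| ≤ 32 * R * δ := by
    have h1 := abs_le.1 (mul_bd (abs_a_le θ v w) hB)
    have h2 := abs_le.1 (mul_bd (abs_b_le θ v w) hA)
    have h3 : |Im| ≤ 8 * R * rho v w := by
      rw [hIm, abs_le]; constructor <;> linarith [h1.1, h1.2, h2.1, h2.2]
    rw [abs_mul]
    calc |Im| * |S| ≤ 8 * R * rho v w * |S| := mul_le_mul_of_nonneg_right h3 (abs_nonneg _)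
      _ = 8 * R * (|S| * rho v w) := by ring
      _ ≤ 8 * R * (4 * δ) := by gcongr
      _ = _ := by ring
  have hReL : NN v w - 8 * R * δ ≤ |Re| := by
    have e1 : v.1.1^2 + v.1.2^2 - (w.1.1^2 + w.1.2^2) = Re + 2 * (bb θ v w * BB θ v w) := by
      rw [← dot_eq θ v w, hRe]; ring
    have h1 := mul_bd h.1 hB
    have h2 : NN v w ≤ |Re| + |2 * (bb θ v w * BB θ v w)| := by
      unfold NN; rw [e1]; exact abs_add_le _ _
    rw [abs_mul, abs_two] at h2
    linarith
  have hRec : (NN v w - 8 * R * δ) / 2 ≤ |Re * c| := by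
    rw [abs_mul]
    nlinarith [abs_nonneg Re]
  have hlow : NN v w / 4 ≤ |Im * S + Re * c| := by
    have : |Re * c| ≤ |Im * S + Re * c| + |Im * S| := by
      have := abs_sub (Im * S + Re * c) (Im * S)
      simpa using this
    linarith
  rw [le_div_iff₀ hNpos]
  nlinarith [abs_nonneg S]

lemma vol_lemma {Θ : Set ℝ} {κ : ℝ} (hΘ : Θ ⊆ Set.Ico 0 π) (h : ∀ θ ∈ Θ, ∀ θ' ∈ Θ, |sin (θ' - θ)| ≤ κ) :
    volume Θ ≤ ENNReal.ofReal (3 * π * κ) := by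
  rcases Θ.eq_empty_or_nonempty with rfl | ⟨θ, hθ⟩
  · simp
  have hκ : 0 ≤ κ := (abs_nonneg _).trans (h θ hθ θ hθ)
  have hpi := pi_pos
  have hsub : Θ ⊆ Metric.closedBall θ (π * κ / 2) ∪ (Metric.closedBall (θ + π) (π * κ / 2) ∪
      Metric.closedBall (θ - π) (π * κ / 2)) := by
    intro θ' hθ'
    have hk := h θ hθ θ' hθ'
    have a1 := hΘ hθ
    have a2 := hΘ hθ'
    have jord : ∀ x, 0 ≤ x → x ≤ π / 2 → |sin x| ≤ κ → x ≤ π * κ / 2 := by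
      intro x hx hx' hs
      have := Real.mul_le_sin hx hx'
      have h2 := this.trans ((le_abs_self _).trans hs)
      rw [div_mul_eq_mul_div, div_le_iff₀ hpi] at h2
      linarith
    simp only [Set.mem_union, Metric.mem_closedBall, Real.dist_eq]
    obtain ⟨b1, b2⟩ := a1
    obtain ⟨b3, b4⟩ := a2
    rcases le_total θ θ' with hle | hle
    · rcases le_total (θ' - θ) (π/2) with h1 | h1
      · left; rw [abs_of_nonneg (by linarith)]; exact jord _ (by linarith) h1 hk
      · right; left
        rw [abs_of_nonpos (by linarith)]
        refine (jord _ (by linarith) (by linarith) ?_)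
        rw [show -(θ' - (θ + π)) = π - (θ' - θ) by ring, sin_pi_sub]; exact hk
    · rcases le_total (θ - θ') (π/2) with h1 | h1
      · left; rw [abs_of_nonpos (by linarith)]
        refine jord _ (by linarith) (by linarith) ?_
        rw [sin_neg, abs_neg]; exact hk
      · right; right
        rw [abs_of_nonneg (by linarith)]
        refine (jord _ (by linarith) (by linarith) ?_)
        rw [show θ' - (θ - π) = (θ' - θ) + π by ring, sin_add_pi, abs_neg]; exact hk
  refine (measure_mono hsub).trans ((measure_union_le _ _).trans ?_)
  refine (add_le_add le_rfl (measure_union_le _ _)).trans ?_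
  simp only [Real.volume_closedBall]
  rw [← ENNReal.ofReal_add (by positivity) (by positivity), ← ENNReal.ofReal_add (by positivity) (by positivity)]
  apply ENNReal.ofReal_le_ofReal
  linarith

lemma vol_pi (δ : ℝ) (v w : Heis) : volume (Th δ v w) ≤ ENNReal.ofReal π := by
  refine (measure_mono (show Th δ v w ⊆ Set.Ico 0 π from fun x hx => hx.1)).trans ?_
  simp

lemma vol_rho (hδ : 0 < δ) (hρ : 2 * δ < rho v w) :
    volume (Th δ v w) ≤ ENNReal.ofReal (12 * π * (δ / rho v w)) := by
  refine (vol_lemma (fun x hx => hx.1) (κ := 4 * δ / rho v w)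
    (fun θ hθ θ' hθ' => pair2 hθ.2 hθ'.2 hδ hρ)).trans (le_of_eq ?_)
  congr 1; ring

lemma vol_N (hR : 0 < R) (hv : Bd R v) (hw : Bd R w) (hδ : 0 < δ) (hρ : 2 * δ < rho v w)
    (hN : 144 * R * δ ≤ NN v w) :
    volume (Th δ v w) ≤ ENNReal.ofReal (12 * π * (δ^2 / NN v w)) := by
  refine (vol_lemma (fun x hx => hx.1) (κ := 4 * δ^2 / NN v w)
    (fun θ hθ θ' hθ' => pair3 hR hv hw hθ.2 hθ'.2 hδ hρ hN)).trans (le_of_eq ?_)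
  congr 1; ring
end HD
end PartC1

section PartC2
open Real MeasureTheory Filter Topology
open scoped ENNReal

namespace HD

lemma cover_core {μ : Measure Heis} {D α : ℝ} (hD : 0 < D)
    (hfr : ∀ v r, 0 < r → μ (Metric.closedBall v r) ≤ ENNReal.ofReal (D * r ^ α))
    {K : Set Heis} {u s : Heis → ℝ}
    (hus : ∀ w w' : Heis, ∀ r, |u w - u w'| ≤ r → |s w - s w'| ≤ r → |w.2 - w'.2| ≤ r → dist w w' ≤ r)
    {c R C : ℝ} (hc : 0 < c) (hR : 0 ≤ R) (hC : 0 ≤ C)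
    (hu : ∀ w ∈ K, ∀ w' ∈ K, 2 * c ≤ |u w + u w'|) (hs : ∀ w ∈ K, |s w| ≤ R)
    {a b s0 e0 t0 ρ n : ℝ} (ha : |a| ≤ 2 * R) (hb : |b| ≤ 2 * R) (hn : 0 < n) (hρ : 0 ≤ ρ) :
    μ {w | w ∈ K ∧ |s w - s0| ≤ ρ ∧ |u w ^ 2 + s w ^ 2 - e0| ≤ n ∧
      |t0 - w.2 - (a * u w + b * s w)| ≤ C * n} ≤
    ENNReal.ofReal (2 * D * (1 + (1 + R) / c + 2 * C + 2 * R * (1 + (1 + R) / c)) ^ α * (ρ / n + 1) * n ^ α) := by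
  classical
  set L := 1 + (1 + R) / c + 2 * C + 2 * R * (1 + (1 + R) / c) with hL
  have hq : 0 ≤ (1 + R) / c := by positivity
  have hLp : 0 < L := by positivity
  set S := {w | w ∈ K ∧ |s w - s0| ≤ ρ ∧ |u w ^ 2 + s w ^ 2 - e0| ≤ n ∧
      |t0 - w.2 - (a * u w + b * s w)| ≤ C * n} with hS
  set f : Heis → ℕ := fun w => ⌊(s w - (s0 - ρ)) / n⌋₊ with hf
  set M := ⌊2 * ρ / n⌋₊ with hM
  have hcov : S ⊆ ⋃ j ∈ Finset.range (M + 1), {w | w ∈ S ∧ f w = j} := by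
    intro w hw
    simp only [Set.mem_iUnion, Finset.mem_range]
    refine ⟨f w, ?_, hw, rfl⟩
    rw [Nat.lt_succ_iff]
    apply Nat.floor_le_floor
    have := abs_le.1 hw.2.1
    gcongr
    linarith
  have hslice : ∀ j, μ {w | w ∈ S ∧ f w = j} ≤ ENNReal.ofReal (D * (L * n) ^ α) := by
    intro j
    by_cases hne : ({w | w ∈ S ∧ f w = j} : Set Heis).Nonempty
    · obtain ⟨w0, hw0, hj0⟩ := hne
      refine le_trans (measure_mono ?_) (hfr w0 (L * n) (by positivity))
      rintro w ⟨hw, hj⟩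
      obtain ⟨k1, k2, k3, k4⟩ := hw
      obtain ⟨l1, l2, l3, l4⟩ := hw0
      have x1 : 0 ≤ (s w - (s0 - ρ)) / n := by
        have := abs_le.1 k2; apply div_nonneg _ hn.le; linarith
      have x2 : 0 ≤ (s w0 - (s0 - ρ)) / n := by
        have := abs_le.1 l2; apply div_nonneg _ hn.le; linarith
      have y1 := Nat.floor_le x1
      have y2 := Nat.lt_floor_add_one ((s w - (s0 - ρ)) / n)
      have y3 := Nat.floor_le x2
      have y4 := Nat.lt_floor_add_one ((s w0 - (s0 - ρ)) / n)
      have e1 : ⌊(s w - (s0 - ρ)) / n⌋₊ = j := hj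
      have e2 : ⌊(s w0 - (s0 - ρ)) / n⌋₊ = j := hj0
      rw [e1] at y1 y2
      rw [e2] at y3 y4
      rw [le_div_iff₀ hn] at y1 y3
      rw [div_lt_iff₀ hn] at y2 y4
      have hss : |s w - s w0| ≤ n := by rw [abs_le]; constructor <;> linarith
      have hsp : |s w + s w0| ≤ 2 * R := by
        have := hs w k1
        have := hs w0 l1
        have := abs_add_le (s w) (s w0)
        linarith
      have huu : |u w - u w0| ≤ (1 + R) / c * n := by
        have h1 : |(u w - u w0) * (u w + u w0)| ≤ 2 * n + n * (2 * R) := by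
          have h2 := mul_bd hss hsp
          have h3 : (u w - u w0) * (u w + u w0) = (u w ^ 2 + s w ^ 2 - e0) - (u w0 ^ 2 + s w0 ^ 2 - e0)
            - (s w - s w0) * (s w + s w0) := by ring
          rw [h3]
          rw [abs_le] at k3 l3 h2 ⊢
          constructor <;> linarith
        rw [abs_mul] at h1
        have h4 : |u w - u w0| * (2 * c) ≤ 2 * n + n * (2 * R) :=
          le_trans (mul_le_mul_of_nonneg_left (hu w k1 w0 l1) (abs_nonneg _)) h1
        rw [div_mul_eq_mul_div, le_div_iff₀ hc]
        linarith
      have htt : |w.2 - w0.2| ≤ 2 * C * n + 2 * R * ((1 + R) / c * n) + 2 * R * n := by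
        have h1 := mul_bd ha huu
        have h2 := mul_bd hb hss
        have h3 : w.2 - w0.2 = (t0 - w0.2 - (a * u w0 + b * s w0)) - (t0 - w.2 - (a * u w + b * s w))
          - a * (u w - u w0) - b * (s w - s w0) := by ring
        rw [h3]
        rw [abs_le] at k4 l4 h1 h2 ⊢
        constructor <;> linarith
      rw [Metric.mem_closedBall]
      have hLn : L * n = n + (1 + R) / c * n + 2 * C * n + 2 * R * n + 2 * R * ((1 + R) / c * n) := by
        rw [hL]; ring
      have p1 : 0 ≤ (1 + R) / c * n := by positivity
      have p2 : 0 ≤ 2 * C * n := by positivity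
      have p3 : 0 ≤ 2 * R * n := by positivity
      have p4 : 0 ≤ 2 * R * ((1 + R) / c * n) := by positivity
      apply hus <;> linarith
    · rw [Set.not_nonempty_iff_eq_empty.1 hne]; simp
  calc μ S ≤ ∑ j ∈ Finset.range (M + 1), μ {w | w ∈ S ∧ f w = j} :=
        (measure_mono hcov).trans (measure_biUnion_finset_le _ _)
    _ ≤ ∑ j ∈ Finset.range (M + 1), ENNReal.ofReal (D * (L * n) ^ α) := Finset.sum_le_sum fun j _ => hslice j
    _ = ENNReal.ofReal ((M + 1 : ℝ) * (D * (L * n) ^ α)) := by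
        rw [Finset.sum_const, Finset.card_range, nsmul_eq_mul, ENNReal.ofReal_mul (p := (M : ℝ) + 1) (by positivity)]
        congr 1
        rw [ENNReal.ofReal_add (by positivity) (by positivity)]; simp
    _ ≤ _ := by
        apply ENNReal.ofReal_le_ofReal
        rw [Real.mul_rpow hLp.le hn.le]
        have h1 : (M : ℝ) ≤ 2 * ρ / n := Nat.floor_le (by positivity)
        have h2 : (M : ℝ) + 1 ≤ 2 * (ρ / n + 1) := by
          have : 2 * ρ / n = 2 * (ρ / n) := by ring
          linarith
        have h3 : 0 ≤ D * (L ^ α * n ^ α) := by positivity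
        calc ((M : ℝ) + 1) * (D * (L ^ α * n ^ α)) ≤ 2 * (ρ / n + 1) * (D * (L ^ α * n ^ α)) := by gcongr
          _ = _ := by ring

lemma cover_H2 {μ : Measure Heis} {D α : ℝ} (hD : 0 < D)
    (hfr : ∀ v r, 0 < r → μ (Metric.closedBall v r) ≤ ENNReal.ofReal (D * r ^ α))
    {K : Set Heis} {c R C : ℝ} (hc : 0 < c) (hR : 0 ≤ R) (hC : 0 ≤ C) (hK : ∀ w ∈ K, Bd R w)
    (hu : (∀ w ∈ K, ∀ w' ∈ K, 2 * c ≤ |w.1.1 + w'.1.1|) ∨ (∀ w ∈ K, ∀ w' ∈ K, 2 * c ≤ |w.1.2 + w'.1.2|))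
    {v : Heis} (hv : Bd R v) {ρ n : ℝ} (hn : 0 < n) (hρ : 0 ≤ ρ) :
    μ {w | w ∈ K ∧ rho v w ≤ ρ ∧ NN v w ≤ n ∧ |TT v w| ≤ C * n} ≤
    ENNReal.ofReal (2 * D * (1 + (1 + R) / c + 2 * C + 2 * R * (1 + (1 + R) / c)) ^ α * (ρ / n + 1) * n ^ α) := by
  obtain ⟨v1, v2⟩ := hv
  have r1 : ∀ w : Heis, |w.1.1 - v.1.1| ≤ rho v w := fun w => by
    rw [abs_sub_comm]; exact Real.abs_le_sqrt (by nlinarith [sq_nonneg (v.1.2 - w.1.2)])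
  have r2 : ∀ w : Heis, |w.1.2 - v.1.2| ≤ rho v w := fun w => by
    rw [abs_sub_comm]; exact Real.abs_le_sqrt (by nlinarith [sq_nonneg (v.1.1 - w.1.1)])
  rcases hu with hu | hu
  · refine le_trans (measure_mono ?_) (cover_core hD hfr (K := K) (u := fun w => w.1.1) (s := fun w => w.1.2)
      ?_ hc hR hC hu (fun w hw => (hK w hw).2) (a := -2 * v.1.2) (b := 2 * v.1.1) (s0 := v.1.2)
      (e0 := v.1.1 ^ 2 + v.1.2 ^ 2) (t0 := v.2) ?_ ?_ hn hρ)
    · rintro w ⟨a1, a2, a3, a4⟩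
      refine ⟨a1, (r2 w).trans a2, ?_, ?_⟩
      · rw [abs_sub_comm]; exact a3
      · convert a4 using 2; unfold TT; ring
    · intro w w' r h1 h2 h3
      simp only [Prod.dist_eq, max_le_iff, Real.dist_eq]; exact ⟨⟨h1, h2⟩, h3⟩
    · rw [abs_mul]; norm_num; exact v2
    · rw [abs_mul]; norm_num; exact v1
  · refine le_trans (measure_mono ?_) (cover_core hD hfr (K := K) (u := fun w => w.1.2) (s := fun w => w.1.1)
      ?_ hc hR hC hu (fun w hw => (hK w hw).1) (a := 2 * v.1.1) (b := -2 * v.1.2) (s0 := v.1.1)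
      (e0 := v.1.1 ^ 2 + v.1.2 ^ 2) (t0 := v.2) ?_ ?_ hn hρ)
    · rintro w ⟨a1, a2, a3, a4⟩
      refine ⟨a1, (r1 w).trans a2, ?_, ?_⟩
      · rw [abs_sub_comm, add_comm (w.1.2 ^ 2)]; exact a3
      · convert a4 using 2; unfold TT; ring
    · intro w w' r h1 h2 h3
      simp only [Prod.dist_eq, max_le_iff, Real.dist_eq]; exact ⟨⟨h2, h1⟩, h3⟩
    · rw [abs_mul]; norm_num; exact v1
    · rw [abs_mul]; norm_num; exact v2

end HD
end PartC2

section PartC3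
open Real MeasureTheory Filter Topology
open scoped ENNReal

namespace HD

lemma int_bound {ι : Type*} {μ : Measure Heis} {K : Set Heis} (hK : MeasurableSet K) {f : Heis → ℝ≥0∞}
    {S : ι → Set Heis} {c : ι → ℝ≥0∞} {J : Finset ι} {B : ℝ≥0∞}
    (h : ∀ w ∈ K, f w = 0 ∨ ∃ j ∈ J, w ∈ S j ∧ f w ≤ c j) (hB : ∀ j ∈ J, c j * μ (S j) ≤ B) :
    ∫⁻ w in K, f w ∂μ ≤ J.card * B := by
  classical
  calc ∫⁻ w in K, f w ∂μ ≤ ∫⁻ w in K, ∑ j ∈ J, (toMeasurable μ (S j)).indicator (fun _ => c j) w ∂μ := by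
        refine setLIntegral_mono' hK fun w hw => ?_
        rcases h w hw with h0 | ⟨j, hj, hjS, hjc⟩
        · rw [h0]; exact zero_le
        · refine hjc.trans (le_trans ?_ (Finset.single_le_sum (f := fun j => (toMeasurable μ (S j)).indicator (fun _ => c j) w) (fun _ _ => zero_le) hj))
          simp only [Set.indicator_of_mem (subset_toMeasurable μ (S j) hjS)]
          exact le_rfl
    _ ≤ ∫⁻ w, ∑ j ∈ J, (toMeasurable μ (S j)).indicator (fun _ => c j) w ∂μ := setLIntegral_le_lintegral _ _
    _ = ∑ j ∈ J, ∫⁻ w, (toMeasurable μ (S j)).indicator (fun _ => c j) w ∂μ :=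
        lintegral_finsetSum _ fun j _ => measurable_const.indicator (measurableSet_toMeasurable _ _)
    _ = ∑ j ∈ J, c j * μ (S j) := by
        refine Finset.sum_congr rfl fun j _ => ?_
        rw [lintegral_indicator_const (measurableSet_toMeasurable _ _), measure_toMeasurable]
    _ ≤ ∑ j ∈ J, B := Finset.sum_le_sum hB
    _ = _ := by simp

lemma rho_le {R : ℝ} (hR : 0 ≤ R) {v w : Heis} (hv : Bd R v) (hw : Bd R w) : rho v w ≤ 4 * R := by
  unfold rho
  apply Real.sqrt_le_iff.2 ⟨by positivity, ?_⟩
  have h1 : |v.1.1 - w.1.1| ≤ 2 * R := (abs_sub _ _).trans (by linarith [hv.1, hw.1])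
  have h2 : |v.1.2 - w.1.2| ≤ 2 * R := (abs_sub _ _).trans (by linarith [hv.2, hw.2])
  have h3 := sq_le_sq' (abs_le.1 h1).1 (abs_le.1 h1).2
  have h4 := sq_le_sq' (abs_le.1 h2).1 (abs_le.1 h2).2
  nlinarith

lemma NN_le {R : ℝ} {v w : Heis} (hv : Bd R v) (hw : Bd R w) : NN v w ≤ 4 * R ^ 2 := by
  unfold NN
  have h1 := sq_le_sq' (abs_le.1 hv.1).1 (abs_le.1 hv.1).2
  have h2 := sq_le_sq' (abs_le.1 hv.2).1 (abs_le.1 hv.2).2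
  have h3 := sq_le_sq' (abs_le.1 hw.1).1 (abs_le.1 hw.1).2
  have h4 := sq_le_sq' (abs_le.1 hw.2).1 (abs_le.1 hw.2).2
  rw [abs_le]
  constructor <;> nlinarith [sq_nonneg v.1.1, sq_nonneg v.1.2, sq_nonneg w.1.1, sq_nonneg w.1.2]

lemma dyadic {x : ℝ} (hx : 1 ≤ x) {N : ℕ} (hN : x ≤ 2 ^ N) :
    ∃ i ∈ Finset.range (N + 1), (2 : ℝ) ^ i ≤ x ∧ x < 2 ^ (i + 1) := by
  obtain ⟨i, h1, h2⟩ := exists_nat_pow_near hx (by norm_num : (1 : ℝ) < 2)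
  refine ⟨i, ?_, h1, h2⟩
  rw [Finset.mem_range, Nat.lt_succ_iff]
  exact (pow_le_pow_iff_right₀ (by norm_num : (1 : ℝ) < 2)).1 (h1.trans hN)

set_option maxHeartbeats 2000000 in
lemma I_est {μ : Measure Heis} {D α : ℝ} (hD : 0 < D) (hα : 0 < α) (hα2 : α ≤ 2)
    (hfr : ∀ v r, 0 < r → μ (Metric.closedBall v r) ≤ ENNReal.ofReal (D * r ^ α))
    {K : Set Heis} (hKm : MeasurableSet K) {c R : ℝ} (hc : 0 < c) (hR : 1 ≤ R) (hK : ∀ w ∈ K, Bd R w)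
    (hu : (∀ w ∈ K, ∀ w' ∈ K, 2 * c ≤ |w.1.1 + w'.1.1|) ∨ (∀ w ∈ K, ∀ w' ∈ K, 2 * c ≤ |w.1.2 + w'.1.2|)) :
    ∃ C : ℝ, 0 ≤ C ∧ ∀ v ∈ K, ∀ k : ℕ, ∫⁻ w in K, volume (Th ((1 / 2) ^ k) v w) ∂μ ≤
      ENNReal.ofReal (C * (k + 1) * ((1 / 2 : ℝ) ^ k) ^ α) := by
  have hR0 : 0 < R := by linarith
  set E : ℝ := 2 * D * (1 + (1 + R) / c + 2 * 3 + 2 * R * (1 + (1 + R) / c)) ^ α with hE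
  have hE0 : 0 ≤ E := by positivity
  obtain ⟨K0, hK0⟩ := pow_unbounded_of_one_lt (4 * R ^ 2) (by norm_num : (1 : ℝ) < 2)
  set Q : ℝ := 2 ^ (K0 + 1) with hQ
  set B : ℝ := π * (D * (3 + 16 * R) ^ α) + 24 * π * E * (144 * R) ^ α + 24 * π * E * (4 * R + Q) with hB
  have b1 : 0 ≤ π * (D * (3 + 16 * R) ^ α) := by positivity
  have b2 : 0 ≤ 24 * π * E * (144 * R) ^ α := by positivity
  have b3 : 0 ≤ 24 * π * E * (4 * R + Q) := by positivity
  have hB0 : 0 ≤ B := by positivity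
  refine ⟨3 * (K0 + 1) * B, by positivity, fun v hvK k => ?_⟩
  set δ : ℝ := (1 / 2) ^ k with hδd
  have hδ : 0 < δ := by positivity
  have hδ1 : δ ≤ 1 := pow_le_one₀ (by norm_num) (by norm_num)
  have hδinv : δ * 2 ^ k = 1 := by rw [hδd, ← mul_pow]; norm_num
  have hδa : 0 ≤ δ ^ α := by positivity
  have hv := hK v hvK
  set N := k + K0 with hN
  let S : Fin 3 × ℕ → Set Heis := fun j =>
    if j.1 = 0 then {w | w ∈ K ∧ rho v w ≤ 2 * δ ∧ |v.2 - w.2| ≤ (1 + 16 * R) * δ}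
    else if j.1 = 1 then {w | w ∈ K ∧ rho v w ≤ 2 ^ (j.2 + 1) * δ ∧ NN v w ≤ 144 * R * δ ∧ |TT v w| ≤ 3 * (144 * R * δ)}
    else {w | w ∈ K ∧ rho v w ≤ 4 * R ∧ NN v w ≤ 2 ^ (j.2 + 1) * δ ∧ |TT v w| ≤ 3 * (2 ^ (j.2 + 1) * δ)}
  let cc : Fin 3 × ℕ → ℝ≥0∞ := fun j =>
    if j.1 = 0 then ENNReal.ofReal π
    else if j.1 = 1 then ENNReal.ofReal (12 * π * (1 / 2 ^ j.2))
    else ENNReal.ofReal (12 * π * (δ / 2 ^ j.2))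
  have key := int_bound (μ := μ) hKm (f := fun w => volume (Th δ v w)) (S := S) (c := cc)
    (J := Finset.univ ×ˢ Finset.range (N + 1)) (B := ENNReal.ofReal (B * δ ^ α)) ?_ ?_
  · refine key.trans ?_
    rw [Finset.card_product, Finset.card_univ, Fintype.card_fin, Finset.card_range]
    rw [← ENNReal.ofReal_natCast, ← ENNReal.ofReal_mul (by positivity)]
    apply ENNReal.ofReal_le_ofReal
    push_cast
    have : (3 : ℝ) * (N + 1) ≤ 3 * (K0 + 1) * (k + 1) := by
      rw [hN]; push_cast
      have : (0 : ℝ) ≤ K0 * k := by positivity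
      nlinarith
    calc (3 : ℝ) * (N + 1) * (B * δ ^ α) ≤ 3 * (K0 + 1) * (k + 1) * (B * δ ^ α) := by gcongr
      _ = _ := by ring
  · intro w hwK
    have hw := hK w hwK
    by_cases hne : (Th δ v w).Nonempty
    swap
    · left; rw [Set.not_nonempty_iff_eq_empty.1 hne]; simp
    right
    obtain ⟨θ, hθ, hEE⟩ := hne
    by_cases hρ : rho v w ≤ 2 * δ
    · refine ⟨(0, 0), by simp, ?_, ?_⟩
      · simp only [S, if_true]
        exact ⟨hwK, hρ, pair0 hR0.le hv hw hδ hδ1 hEE hρ⟩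
      · simp only [cc, if_true]; exact vol_pi _ _ _
    push Not at hρ
    have hT := pair1 hR0.le hv hw hδ hδ1 hEE hρ
    have hρ0 : 0 < rho v w := by linarith
    have hRδ : δ ≤ R * δ := le_mul_of_one_le_left hδ.le hR
    by_cases hNN : 144 * R * δ ≤ NN v w
    · have hNp : 0 < NN v w := by nlinarith
      obtain ⟨i, hi, i1, i2⟩ := dyadic (x := NN v w / δ) (N := N) (by rw [le_div_iff₀ hδ]; nlinarith) (by
        rw [div_le_iff₀ hδ, hN, pow_add]
        have := NN_le hv hw
        calc NN v w ≤ 2 ^ K0 * (δ * 2 ^ k) := by rw [hδinv]; linarith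
          _ = _ := by ring)
      rw [le_div_iff₀ hδ] at i1
      rw [div_lt_iff₀ hδ] at i2
      refine ⟨(2, i), by simpa using hi, ?_, ?_⟩
      · simp only [S, show (2 : Fin 3) ≠ 0 by decide, show (2 : Fin 3) ≠ 1 by decide, if_false]
        refine ⟨hwK, rho_le hR0.le hv hw, i2.le, ?_⟩
        nlinarith
      · simp only [cc, show (2 : Fin 3) ≠ 0 by decide, show (2 : Fin 3) ≠ 1 by decide, if_false]
        refine (vol_N hR0 hv hw hδ hρ hNN).trans (ENNReal.ofReal_le_ofReal ?_)
        have : δ ^ 2 / NN v w ≤ δ / 2 ^ i := by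
          rw [div_le_div_iff₀ hNp (by positivity)]
          nlinarith
        gcongr
    · push Not at hNN
      obtain ⟨i, hi, i1, i2⟩ := dyadic (x := rho v w / δ) (N := N) (by rw [le_div_iff₀ hδ]; linarith) (by
        rw [div_le_iff₀ hδ, hN, pow_add]
        have := rho_le hR0.le hv hw
        calc rho v w ≤ 2 ^ K0 * (δ * 2 ^ k) := by rw [hδinv]; nlinarith
          _ = _ := by ring)
      rw [le_div_iff₀ hδ] at i1
      rw [div_lt_iff₀ hδ] at i2
      refine ⟨(1, i), by simpa using hi, ?_, ?_⟩
      · simp only [S, show (1 : Fin 3) ≠ 0 by decide, if_false, if_true]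
        refine ⟨hwK, i2.le, hNN.le, ?_⟩
        nlinarith
      · simp only [cc, show (1 : Fin 3) ≠ 0 by decide, if_false, if_true]
        refine (vol_rho hδ hρ).trans (ENNReal.ofReal_le_ofReal ?_)
        have : δ / rho v w ≤ 1 / 2 ^ i := by
          rw [div_le_div_iff₀ hρ0 (by positivity)]
          nlinarith
        gcongr
  · rintro ⟨j, i⟩ hj
    have hi : i ≤ N := by simpa [Nat.lt_succ_iff] using hj
    have hp0 : (0 : ℝ) < 2 ^ i := by positivity
    fin_cases j
    · simp only [S, cc, Fin.zero_eta, if_true]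
      have hsub : {w | w ∈ K ∧ rho v w ≤ 2 * δ ∧ |v.2 - w.2| ≤ (1 + 16 * R) * δ} ⊆
          Metric.closedBall v ((3 + 16 * R) * δ) := by
        rintro w ⟨_, h1, h2⟩
        have x1 : |v.1.1 - w.1.1| ≤ rho v w :=
          Real.abs_le_sqrt (by nlinarith [sq_nonneg (v.1.2 - w.1.2)])
        have x2 : |v.1.2 - w.1.2| ≤ rho v w :=
          Real.abs_le_sqrt (by nlinarith [sq_nonneg (v.1.1 - w.1.1)])
        rw [Metric.mem_closedBall, dist_comm]
        simp only [Prod.dist_eq, max_le_iff, Real.dist_eq]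
        have : 0 ≤ R * δ := by positivity
        refine ⟨⟨?_, ?_⟩, ?_⟩ <;> nlinarith
      refine (mul_le_mul_right ((measure_mono hsub).trans (hfr _ _ (by positivity))) _).trans ?_
      rw [← ENNReal.ofReal_mul (by positivity)]
      apply ENNReal.ofReal_le_ofReal
      rw [Real.mul_rpow (by positivity) hδ.le]
      calc π * (D * ((3 + 16 * R) ^ α * δ ^ α)) = π * (D * (3 + 16 * R) ^ α) * δ ^ α := by ring
        _ ≤ B * δ ^ α := by apply mul_le_mul_of_nonneg_right _ hδa; linarith
    · simp only [S, cc, Fin.mk_one, show (1 : Fin 3) ≠ 0 by decide, if_false, if_true]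
      refine (mul_le_mul_right (cover_H2 hD hfr hc hR0.le (by norm_num : (0 : ℝ) ≤ 3) hK hu hv (by positivity) (by positivity)) _).trans ?_
      rw [← hE, ← ENNReal.ofReal_mul (by positivity)]
      apply ENNReal.ofReal_le_ofReal
      rw [Real.mul_rpow (by positivity) hδ.le]
      have e1 : (2 : ℝ) ^ (i + 1) * δ / (144 * R * δ) = 2 ^ i * (2 / (144 * R)) := by
        field_simp; ring
      have e2 : (1 / 2 ^ i : ℝ) * (2 ^ i * (2 / (144 * R)) + 1) ≤ 2 := by
        have : (1 / 2 ^ i : ℝ) * (2 ^ i * (2 / (144 * R)) + 1) = 2 / (144 * R) + 1 / 2 ^ i := by field_simp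
        rw [this]
        have f1 : 2 / (144 * R) ≤ 1 := by rw [div_le_one (by positivity)]; linarith
        have f2 : (1 / 2 ^ i : ℝ) ≤ 1 := by
          rw [div_le_one (by positivity)]; exact one_le_pow₀ (by norm_num)
        linarith
      rw [e1]
      calc 12 * π * (1 / 2 ^ i) * (E * (2 ^ i * (2 / (144 * R)) + 1) * ((144 * R) ^ α * δ ^ α))
          = ((1 / 2 ^ i : ℝ) * (2 ^ i * (2 / (144 * R)) + 1)) * (12 * π * E * (144 * R) ^ α * δ ^ α) := by ring
        _ ≤ 2 * (12 * π * E * (144 * R) ^ α * δ ^ α) := by gcongr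
        _ = 24 * π * E * (144 * R) ^ α * δ ^ α := by ring
        _ ≤ B * δ ^ α := by apply mul_le_mul_of_nonneg_right _ hδa; linarith
    · simp only [S, cc, Fin.reduceFinMk, show (2 : Fin 3) ≠ 0 by decide, show (2 : Fin 3) ≠ 1 by decide, if_false]
      refine (mul_le_mul_right (cover_H2 hD hfr hc hR0.le (by norm_num : (0 : ℝ) ≤ 3) hK hu hv (by positivity) (by positivity)) _).trans ?_
      rw [← hE, ← ENNReal.ofReal_mul (by positivity)]
      apply ENNReal.ofReal_le_ofReal
      set n : ℝ := 2 ^ (i + 1) * δ with hn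
      have hn0 : 0 < n := by positivity
      have hnQ : n ≤ Q := by
        calc n ≤ 2 ^ (N + 1) * δ := by rw [hn]; gcongr; norm_num
          _ = Q * (δ * 2 ^ k) := by rw [hQ, hN]; ring
          _ = Q := by rw [hδinv, mul_one]
      have hnδ : δ ≤ n := le_mul_of_one_le_left hδ.le (one_le_pow₀ (by norm_num))
      have e1 : δ / 2 ^ i = 2 * δ ^ 2 / n := by rw [hn]; field_simp; ring
      have e2 : n ^ α = n ^ (α - 2) * n ^ 2 := by
        rw [← Real.rpow_natCast, ← Real.rpow_add hn0]; congr 1; push_cast; ring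
      have e3 : δ ^ α = δ ^ (α - 2) * δ ^ 2 := by
        rw [← Real.rpow_natCast, ← Real.rpow_add hδ]; congr 1; push_cast; ring
      have e4 : n ^ (α - 2) ≤ δ ^ (α - 2) := Real.rpow_le_rpow_of_nonpos hδ hnδ (by linarith)
      rw [e1, e2]
      calc 12 * π * (2 * δ ^ 2 / n) * (E * (4 * R / n + 1) * (n ^ (α - 2) * n ^ 2))
          = 24 * π * E * (4 * R + n) * (n ^ (α - 2) * δ ^ 2) := by field_simp; ring
        _ ≤ 24 * π * E * (4 * R + Q) * (δ ^ (α - 2) * δ ^ 2) := by gcongr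
        _ = 24 * π * E * (4 * R + Q) * δ ^ α := by rw [e3]
        _ ≤ B * δ ^ α := by apply mul_le_mul_of_nonneg_right _ hδa; linarith

end HD
end PartC3

section PartD1
open Real MeasureTheory Filter Topology
open scoped ENNReal

namespace HD

noncomputable def wt (σ : ℝ) (k : ℕ) : ℝ≥0∞ := ENNReal.ofReal (((2 : ℝ) ^ k) ^ σ)

noncomputable def GG (μ : Measure Heis) (σ θ : ℝ) (v : Heis) : ℝ≥0∞ :=
  ∑' k : ℕ, wt σ k * μ {w | EE ((1 / 2) ^ k) θ v w}

lemma wt_ge_one {σ : ℝ} (hσ : 0 ≤ σ) (k : ℕ) : 1 ≤ wt σ k := by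
  unfold wt
  rw [ENNReal.one_le_ofReal]
  exact Real.one_le_rpow (one_le_pow₀ (by norm_num)) hσ

lemma piece {μ : Measure Heis} {σ θ : ℝ} (hσ : 0 < σ) {M : ℕ} {X : Set Heis} {t : Set Heis}
    (hX : ∀ v ∈ X, GG μ σ θ v ≤ M ∧ PVperp θ v ∈ t) (ht : ediamK t ≤ ENNReal.ofReal 1) :
    μ X ≤ M * ENNReal.ofReal (2 ^ σ) * ediamK t ^ σ := by
  rcases X.eq_empty_or_nonempty with rfl | ⟨v, hv⟩
  · simp
  have hfin : ediamK t ≠ ∞ := ne_top_of_le_ne_top ENNReal.ofReal_ne_top ht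
  set d := (ediamK t).toReal with hd
  have hdt : ediamK t = ENNReal.ofReal d := (ENNReal.ofReal_toReal hfin).symm
  have hd0 : 0 ≤ d := ENNReal.toReal_nonneg
  have hd1 : d ≤ 1 := by
    rw [hdt] at ht
    exact (ENNReal.ofReal_le_ofReal_iff (by norm_num)).1 ht
  have hsub : ∀ k : ℕ, d ≤ (1 / 2) ^ k → μ X ≤ μ {w | EE ((1 / 2) ^ k) θ v w} := by
    intro k hk
    refine measure_mono fun w hw => ?_
    refine EE_of_dH (by positivity) (le_trans ?_ hk)
    have := le_ediamK (hX v hv).2 (hX w hw).2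
    rw [hdt] at this
    exact (ENNReal.ofReal_le_ofReal_iff hd0).1 this
  have hG := (hX v hv).1
  rcases hd0.eq_or_lt with h0 | hpos
  · have : μ X = 0 := by
      by_contra hne
      have h1 : ∑' _ : ℕ, μ X ≤ GG μ σ θ v := by
        unfold GG
        refine ENNReal.tsum_le_tsum fun k => ?_
        refine (hsub k (by rw [← h0]; positivity)).trans ?_
        exact le_mul_of_one_le_left zero_le (wt_ge_one hσ.le k)
      rw [ENNReal.tsum_const_eq_top_of_ne_zero hne] at h1
      have h2 := h1.trans hG
      simp at h2
    rw [this]; exact zero_le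
  · obtain ⟨k, k1, k2⟩ := exists_nat_pow_near_of_lt_one (x := d) (y := (1 / 2 : ℝ)) hpos hd1 (by norm_num) (by norm_num)
    have h1 : wt σ k * μ X ≤ M := by
      refine (mul_le_mul_right (hsub k k2) _).trans (le_trans ?_ hG)
      exact ENNReal.le_tsum (f := fun k => wt σ k * μ {w | EE ((1 / 2) ^ k) θ v w}) k
    have h2 : 1 ≤ ENNReal.ofReal (2 ^ σ) * ediamK t ^ σ * wt σ k := by
      rw [hdt, ENNReal.ofReal_rpow_of_nonneg hd0 hσ.le, wt, ← ENNReal.ofReal_mul (by positivity),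
        ← ENNReal.ofReal_mul (by positivity), ENNReal.one_le_ofReal, ← Real.mul_rpow (by norm_num) hd0,
        ← Real.mul_rpow (by positivity) (by positivity)]
      apply Real.one_le_rpow _ hσ.le
      have h3 : (1 / 2 : ℝ) ^ (k + 1) * 2 ^ (k + 1) = 1 := by rw [← mul_pow]; norm_num
      have h4 : (1 / 2 : ℝ) ^ (k + 1) * 2 ^ (k + 1) ≤ d * 2 ^ (k + 1) := by gcongr
      calc (1 : ℝ) ≤ d * 2 ^ (k + 1) := by rw [← h3]; exact h4
        _ = 2 * d * 2 ^ k := by ring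
    calc μ X = 1 * μ X := (one_mul _).symm
      _ ≤ ENNReal.ofReal (2 ^ σ) * ediamK t ^ σ * wt σ k * μ X := by gcongr
      _ = ENNReal.ofReal (2 ^ σ) * ediamK t ^ σ * (wt σ k * μ X) := by ring
      _ ≤ ENNReal.ofReal (2 ^ σ) * ediamK t ^ σ * M := by gcongr
      _ = _ := by ring

lemma hMeasK_pos {μ : Measure Heis} [IsProbabilityMeasure μ] {σ σ' θ : ℝ} (hσ : 0 < σ)
    (hσ' : σ' ≤ σ) {K A : Set Heis} (hKA : K ⊆ A) (hK : μ Kᶜ = 0)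
    (hG : ∀ᵐ v ∂μ, GG μ σ θ v < ∞) : hMeasK σ' (PVperp θ '' A) ≠ 0 := by
  intro h0
  have hM : ∃ M : ℕ, μ {v | v ∈ K ∧ GG μ σ θ v ≤ M} ≠ 0 := by
    by_contra hcon
    push Not at hcon
    have h1 : μ (⋃ M : ℕ, {v | v ∈ K ∧ GG μ σ θ v ≤ M}) = 0 := measure_iUnion_null hcon
    have h2 : ∀ᵐ v ∂μ, v ∈ ⋃ M : ℕ, {v | v ∈ K ∧ GG μ σ θ v ≤ M} := by
      have hK' : ∀ᵐ v ∂μ, v ∈ K := hK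
      filter_upwards [hG, hK'] with v hv hvK
      obtain ⟨n, hn⟩ := ENNReal.exists_nat_gt hv.ne
      exact Set.mem_iUnion.2 ⟨n, hvK, hn.le⟩
    have h3 : μ (⋃ M : ℕ, {v | v ∈ K ∧ GG μ σ θ v ≤ M})ᶜ = 0 := h2
    have h4 : μ Set.univ ≤ 0 := by
      rw [← Set.union_compl_self (⋃ M : ℕ, {v | v ∈ K ∧ GG μ σ θ v ≤ M})]
      refine (measure_union_le _ _).trans ?_
      rw [h1, h3]; simp
    simp at h4
  obtain ⟨M, hM⟩ := hM
  set S := {v | v ∈ K ∧ GG μ σ θ v ≤ M} with hS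
  set c : ℝ≥0∞ := M * ENNReal.ofReal (2 ^ σ) with hc
  have hcfin : c ≠ ∞ := ENNReal.mul_ne_top (by simp) ENNReal.ofReal_ne_top
  have hε : μ S / (c + 1) ≠ 0 := by
    rw [ne_eq, ENNReal.div_eq_zero_iff]
    push Not
    exact ⟨hM, by simpa using hcfin⟩
  obtain ⟨t, t1, t2, t3⟩ := hMeasK_zero_exists h0 one_pos hε
  have h1 : μ S ≤ ∑' n, μ {v | v ∈ S ∧ PVperp θ v ∈ t n} := by
    refine (measure_mono ?_).trans (measure_iUnion_le _)
    intro v hv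
    obtain ⟨n, hn⟩ := Set.mem_iUnion.1 (t1 ⟨v, hKA hv.1, rfl⟩)
    exact Set.mem_iUnion.2 ⟨n, hv, hn⟩
  have h2 : ∑' n, μ {v | v ∈ S ∧ PVperp θ v ∈ t n} ≤ ∑' n, c * ediamK (t n) ^ σ' := by
    refine ENNReal.tsum_le_tsum fun n => ?_
    refine (piece hσ (fun v hv => ⟨hv.1.2, hv.2⟩) (t2 n)).trans ?_
    refine mul_le_mul_right ?_ _
    exact ENNReal.rpow_le_rpow_of_exponent_ge (by simpa using t2 n) hσ'
  rw [ENNReal.tsum_mul_left] at h2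
  have h3 : μ S < μ S := by
    calc μ S ≤ c * ∑' n, ediamK (t n) ^ σ' := h1.trans h2
      _ ≤ (c + 1) * ∑' n, ediamK (t n) ^ σ' := by gcongr; exact le_self_add
      _ < (c + 1) * (μ S / (c + 1)) := by
          refine ENNReal.mul_lt_mul_right ?_ ?_ t3
          · simp
          · simpa using hcfin
      _ ≤ μ S := ENNReal.mul_div_le
  exact lt_irrefl _ h3

end HD
end PartD1

section PartD2
open Real MeasureTheory Filter Topology
open scoped ENNReal

namespace HD

lemma EE_closed (δ : ℝ) : IsClosed {p : ℝ × (Heis × Heis) | EE δ p.1 p.2.1 p.2.2} := by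
  unfold EE UU aa bb AA BB
  refine IsClosed.and ?_ ?_ <;> exact isClosed_le (by fun_prop) (by fun_prop)

lemma ae_G {μ : Measure Heis} [IsProbabilityMeasure μ] {σ α C : ℝ} {K : Set Heis}
    (hσα : σ < α) (hC : 0 ≤ C) (hK0 : μ Kᶜ = 0)
    (hI : ∀ v ∈ K, ∀ k : ℕ, ∫⁻ w in K, volume (Th ((1 / 2) ^ k) v w) ∂μ ≤
      ENNReal.ofReal (C * (k + 1) * ((1 / 2 : ℝ) ^ k) ^ α)) :
    ∀ᵐ θ ∂(volume.restrict (Set.Ico (0 : ℝ) π)), ∀ᵐ v ∂μ, GG μ σ θ v < ∞ := by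
  set ν := volume.restrict (Set.Ico (0 : ℝ) π) with hν
  have hK' : ∀ᵐ v ∂μ, v ∈ K := hK0
  have hrest : μ.restrict K = μ := Measure.restrict_eq_self_of_ae_mem hK'
  have hm : ∀ δ : ℝ, MeasurableSet {p : ℝ × (Heis × Heis) | EE δ p.1 p.2.1 p.2.2} :=
    fun δ => (EE_closed δ).measurableSet
  have hm2 : ∀ δ θ : ℝ, MeasurableSet {p : Heis × Heis | EE δ θ p.1 p.2} := fun δ θ =>
    (hm δ).preimage (f := fun p : Heis × Heis => (θ, p)) (by fun_prop)
  -- first Tonelli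
  have hJ : ∀ k : ℕ, ∫⁻ θ, (μ.prod μ) {p : Heis × Heis | EE ((1 / 2) ^ k) θ p.1 p.2} ∂ν ≤
      ENNReal.ofReal (C * (k + 1) * ((1 / 2 : ℝ) ^ k) ^ α) := by
    intro k
    have h1 := Measure.prod_apply (μ := ν) (ν := μ.prod μ) (hm ((1 / 2) ^ k))
    have h2 := Measure.prod_apply_symm (μ := ν) (ν := μ.prod μ) (hm ((1 / 2) ^ k))
    have h3 : ∫⁻ θ, (μ.prod μ) {p : Heis × Heis | EE ((1 / 2) ^ k) θ p.1 p.2} ∂ν =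
      ∫⁻ p, ν ((fun θ => (θ, p)) ⁻¹' {p : ℝ × (Heis × Heis) | EE ((1 / 2) ^ k) p.1 p.2.1 p.2.2}) ∂(μ.prod μ) := by
      rw [← h2, h1]; rfl
    rw [h3]
    have hmeas := measurable_measure_prodMk_right (μ := ν) (hm ((1 / 2) ^ k))
    rw [lintegral_prod _ hmeas.aemeasurable]
    have h4 : ∀ v w : Heis, ν ((fun θ => (θ, (v, w))) ⁻¹' {p : ℝ × (Heis × Heis) | EE ((1 / 2) ^ k) p.1 p.2.1 p.2.2})
        = volume (Th ((1 / 2) ^ k) v w) := by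
      intro v w
      rw [hν, Measure.restrict_apply ((hm _).preimage (by fun_prop)), Set.inter_comm]
      rfl
    simp only [h4]
    calc ∫⁻ v, ∫⁻ w, volume (Th ((1 / 2) ^ k) v w) ∂μ ∂μ
        ≤ ∫⁻ v, ENNReal.ofReal (C * (k + 1) * ((1 / 2 : ℝ) ^ k) ^ α) ∂μ := by
          refine lintegral_mono_ae ?_
          filter_upwards [hK'] with v hv
          have := hI v hv k
          rwa [hrest] at this
      _ = _ := by simp
  have hJm : ∀ k : ℕ, Measurable fun θ => (μ.prod μ) {p : Heis × Heis | EE ((1 / 2) ^ k) θ p.1 p.2} :=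
    fun k => measurable_measure_prodMk_left (ν := μ.prod μ) (hm ((1 / 2) ^ k))
  have hsum : ∫⁻ θ, ∑' k, wt σ k * (μ.prod μ) {p : Heis × Heis | EE ((1 / 2) ^ k) θ p.1 p.2} ∂ν ≠ ∞ := by
    rw [lintegral_tsum fun k => ((hJm k).const_mul _).aemeasurable]
    refine ne_top_of_le_ne_top ?_ (ENNReal.tsum_le_tsum fun k => ?_)
      (b := ∑' k : ℕ, ENNReal.ofReal (C * (((k : ℝ) + 1) * ((2 : ℝ) ^ (σ - α)) ^ k)))
    · apply Summable.tsum_ofReal_ne_top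
      have hr0 : (0 : ℝ) < 2 ^ (σ - α) := by positivity
      have hr1 : (2 : ℝ) ^ (σ - α) < 1 := Real.rpow_lt_one_of_one_lt_of_neg (by norm_num) (by linarith)
      have hrn : ‖(2 : ℝ) ^ (σ - α)‖ < 1 := by rwa [Real.norm_of_nonneg hr0.le]
      apply Summable.mul_left
      have s1 := summable_pow_mul_geometric_of_norm_lt_one 1 hrn
      have s2 := summable_geometric_of_norm_lt_one hrn
      refine (s1.add s2).congr fun k => ?_
      rw [pow_one]; ring
    · rw [lintegral_const_mul _ (hJm k)]
      refine (mul_le_mul_right (hJ k) _).trans ?_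
      rw [wt, ← ENNReal.ofReal_mul (by positivity)]
      apply ENNReal.ofReal_le_ofReal
      apply le_of_eq
      have e1 : ((2 : ℝ) ^ k) ^ σ * ((1 / 2 : ℝ) ^ k) ^ α = ((2 : ℝ) ^ (σ - α)) ^ k := by
        rw [one_div, inv_pow, Real.inv_rpow (by positivity), ← Real.rpow_neg (by positivity),
          ← Real.rpow_add (by positivity), ← Real.rpow_natCast, ← Real.rpow_natCast, ← Real.rpow_mul (by norm_num),
          ← Real.rpow_mul (by norm_num)]
        congr 1; ring
      rw [← e1]; ring
  have hae := ae_lt_top (Measurable.tsum fun k => (hJm k).const_mul (wt σ k)) hsum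
  filter_upwards [hae] with θ hθ
  have hgm : ∀ k : ℕ, Measurable fun v => μ {w | EE ((1 / 2) ^ k) θ v w} := fun k =>
    measurable_measure_prodMk_left (ν := μ) (hm2 ((1 / 2) ^ k) θ)
  have hmG : Measurable (GG μ σ θ) := by
    unfold GG
    exact Measurable.tsum fun k => (hgm k).const_mul _
  refine ae_lt_top hmG ?_
  refine ne_of_lt (lt_of_le_of_lt (le_of_eq ?_) hθ)
  unfold GG
  rw [lintegral_tsum fun k => ((hgm k).const_mul _).aemeasurable]
  refine tsum_congr fun k => ?_
  rw [lintegral_const_mul _ (hgm k), Measure.prod_apply (hm2 _ _)]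
  rfl

end HD
end PartD2

section PartD3
open Real MeasureTheory Filter Topology
open scoped ENNReal

namespace HD

lemma null_of_dimH {d : ℝ} (hd : 0 ≤ d) {S : Set Heis} (h : dimH S < ENNReal.ofReal d) : μH[d] S = 0 := by
  have := hausdorffMeasure_of_dimH_lt (d := d.toNNReal) h
  rwa [Real.coe_toNNReal d hd] at this

lemma univ_null : μH[(4 : ℝ)] (Set.univ : Set Heis) = 0 := by
  apply null_of_dimH (by norm_num)
  rw [Real.dimH_univ_eq_finrank]
  simp only [Module.finrank_prod, Module.finrank_self]
  rw [← ENNReal.ofReal_natCast, ENNReal.ofReal_lt_ofReal_iff (by norm_num)]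
  norm_num

lemma axis_null {α : ℝ} (hα : 1 < α) : μH[α] (Set.range fun t : ℝ => (((0, 0), t) : Heis)) = 0 := by
  apply null_of_dimH (by linarith)
  have hL : LipschitzWith 1 (fun t : ℝ => (((0, 0), t) : Heis)) := by
    refine LipschitzWith.of_dist_le_mul fun x y => ?_
    simp [Prod.dist_eq]
  refine lt_of_le_of_lt hL.dimH_range_le ?_
  rw [Real.dimH_univ]
  exact ENNReal.one_lt_ofReal.2 hα

noncomputable def gg (q : Bool × Bool) (w : Heis) : ℝ :=
  (if q.1 then 1 else -1) * (if q.2 then w.1.1 else w.1.2)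

def cube (p : ℤ × ℤ × ℤ) : Set Heis := {v | v.1.1 ∈ Set.Icc (p.1 : ℝ) (p.1 + 1) ∧
  v.1.2 ∈ Set.Icc (p.2.1 : ℝ) (p.2.1 + 1) ∧ v.2 ∈ Set.Icc (p.2.2 : ℝ) (p.2.2 + 1)}

lemma cube_closed (p : ℤ × ℤ × ℤ) : IsClosed (cube p) := by
  unfold cube
  refine IsClosed.and (isClosed_Icc.preimage (by fun_prop)) (IsClosed.and (isClosed_Icc.preimage (by fun_prop))
    (isClosed_Icc.preimage (by fun_prop)))

lemma gg_cont (q : Bool × Bool) : Continuous (gg q) := by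
  obtain ⟨a, b⟩ := q
  unfold gg
  cases a <;> cases b <;> simp <;> fun_prop

lemma analytic_inter {A B : Set Heis} (hA : AnalyticSet A) (hB : IsClosed B) : AnalyticSet (A ∩ B) := by
  rw [Set.inter_eq_iInter]
  refine AnalyticSet.iInter fun b => ?_
  cases b
  · exact hB.analyticSet
  · exact hA

lemma select {A : Set Heis} (hA : AnalyticSet A) {α : ℝ} (hα : 1 < α) (h : μH[α] A ≠ 0) :
    ∃ (p : ℤ × ℤ × ℤ) (A' : Set Heis) (c : ℝ), A' ⊆ A ∧ A' ⊆ cube p ∧ AnalyticSet A' ∧ 0 < c ∧ μH[α] A' ≠ 0 ∧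
      ((∀ w ∈ A', ∀ w' ∈ A', 2 * c ≤ |w.1.1 + w'.1.1|) ∨ (∀ w ∈ A', ∀ w' ∈ A', 2 * c ≤ |w.1.2 + w'.1.2|)) := by
  by_contra hcon
  push Not at hcon
  have hnull : ∀ i : (ℤ × ℤ × ℤ) × ℕ × (Bool × Bool),
      μH[α] (A ∩ (cube i.1 ∩ {w | (1 : ℝ) / (i.2.1 + 1) ≤ gg i.2.2 w})) = 0 := by
    rintro ⟨p, n, q⟩
    by_contra hne
    have hcl : IsClosed (cube p ∩ {w | (1 : ℝ) / (n + 1) ≤ gg q w}) :=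
      (cube_closed p).inter (isClosed_le continuous_const (gg_cont q))
    obtain ⟨h1, h2⟩ := hcon p _ (1 / (n + 1)) Set.inter_subset_left (fun w hw => hw.2.1)
      (analytic_inter hA hcl) (by positivity) hne
    obtain ⟨w, hw, w', hw', hlt⟩ := h1
    obtain ⟨z, hz, z', hz', hlt'⟩ := h2
    have g1 : (1 : ℝ) / (n + 1) ≤ gg q w := hw.2.2
    have g2 : (1 : ℝ) / (n + 1) ≤ gg q w' := hw'.2.2
    have g3 : (1 : ℝ) / (n + 1) ≤ gg q z := hz.2.2
    have g4 : (1 : ℝ) / (n + 1) ≤ gg q z' := hz'.2.2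
    rw [abs_lt] at hlt hlt'
    obtain ⟨a, b⟩ := q
    cases a <;> cases b <;> simp only [gg, if_true, if_false, Bool.false_eq_true] at g1 g2 g3 g4 <;> linarith [hlt.1, hlt.2, hlt'.1, hlt'.2]
  apply h
  have hcov : A ⊆ (⋃ i : (ℤ × ℤ × ℤ) × ℕ × (Bool × Bool), A ∩ (cube i.1 ∩ {w | (1 : ℝ) / (i.2.1 + 1) ≤ gg i.2.2 w}))
      ∪ (Set.range fun t : ℝ => (((0, 0), t) : Heis)) := by
    intro v hv
    by_cases h0 : v.1.1 = 0 ∧ v.1.2 = 0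
    · right
      exact ⟨v.2, Prod.ext (Prod.ext h0.1.symm h0.2.symm) rfl⟩
    · left
      have hq : ∃ q, 0 < gg q v := by
        by_cases hx : v.1.1 = 0
        · have hy : v.1.2 ≠ 0 := fun hy => h0 ⟨hx, hy⟩
          rcases lt_or_gt_of_ne hy with hy | hy
          · exact ⟨(false, false), by simpa [gg] using hy⟩
          · exact ⟨(true, false), by simpa [gg] using hy⟩
        · rcases lt_or_gt_of_ne hx with hy | hy
          · exact ⟨(false, true), by simpa [gg] using hy⟩
          · exact ⟨(true, true), by simpa [gg] using hy⟩
      obtain ⟨q, hq⟩ := hq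
      obtain ⟨n, hn⟩ := exists_nat_one_div_lt hq
      refine Set.mem_iUnion.2 ⟨((⌊v.1.1⌋, ⌊v.1.2⌋, ⌊v.2⌋), n, q), hv, ?_, hn.le⟩
      exact ⟨⟨Int.floor_le _, (Int.lt_floor_add_one _).le⟩, ⟨Int.floor_le _, (Int.lt_floor_add_one _).le⟩,
        ⟨Int.floor_le _, (Int.lt_floor_add_one _).le⟩⟩
  exact measure_mono_null hcov (measure_union_null (measure_iUnion_null hnull) (axis_null hα))

lemma main_sigma {A : Set Heis} (hA : AnalyticSet A) {α σ : ℝ} (hσ : 0 < σ) (hσα : σ < α) (hα1 : 1 < α)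
    (hα2 : α ≤ 2) (h : μH[α] A ≠ 0) :
    ∀ᵐ θ ∂(volume.restrict (Set.Ico (0 : ℝ) π)), ∀ σ' ≤ σ, hMeasK σ' (PVperp θ '' A) ≠ 0 := by
  obtain ⟨p, A', c, hAA, hcube, hA', hc, hne, hsep⟩ := select hA hα1 h
  obtain ⟨μ, D, K, hprob, hD, hKc, hKA, hK0, hfr⟩ := Fro.frostman (((p.1 : ℝ), (p.2.1 : ℝ)), (p.2.2 : ℝ)) hA'
    (fun v hv => hcube hv) (by linarith) hne
  have hBd : ∀ w ∈ K, Bd (|(p.1 : ℝ)| + |(p.2.1 : ℝ)| + 1) w := by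
    intro w hw
    obtain ⟨⟨a1, a2⟩, ⟨b1, b2⟩, _⟩ := hcube (hKA hw)
    have := neg_abs_le (p.1 : ℝ)
    have := le_abs_self (p.1 : ℝ)
    have := neg_abs_le (p.2.1 : ℝ)
    have := le_abs_self (p.2.1 : ℝ)
    have := abs_nonneg (p.1 : ℝ)
    have := abs_nonneg (p.2.1 : ℝ)
    constructor <;> rw [abs_le] <;> constructor <;> linarith
  have hsep' : (∀ w ∈ K, ∀ w' ∈ K, 2 * c ≤ |w.1.1 + w'.1.1|) ∨ (∀ w ∈ K, ∀ w' ∈ K, 2 * c ≤ |w.1.2 + w'.1.2|) :=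
    hsep.imp (fun h w hw w' hw' => h w (hKA hw) w' (hKA hw')) (fun h w hw w' hw' => h w (hKA hw) w' (hKA hw'))
  obtain ⟨C, hC, hI⟩ := I_est hD (by linarith) hα2 hfr hKc.measurableSet hc
    (by have := abs_nonneg (p.1 : ℝ); have := abs_nonneg (p.2.1 : ℝ); linarith) hBd hsep'
  filter_upwards [ae_G hσα hC hK0 hI] with θ hθ σ' hσ'
  exact hMeasK_pos hσ hσ' (hKA.trans hAA) hK0 hθ

lemma main_tau {A : Set Heis} (hA : AnalyticSet A) {s τ : ℝ} (hdim : hDimK A = s) (h2 : 2 < s)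
    (hτ0 : 0 < τ) (hτ1 : τ ≤ s - 1) (hτ2 : τ ≤ 2) :
    ∀ᵐ θ ∂(volume.restrict (Set.Ico (0 : ℝ) π)), τ ≤ hDimK (PVperp θ '' A) := by
  have hq : ∀ q : ℚ, 0 < (q : ℝ) → (q : ℝ) < τ →
      ∀ᵐ θ ∂(volume.restrict (Set.Ico (0 : ℝ) π)), ∀ σ' ≤ (q : ℝ), hMeasK σ' (PVperp θ '' A) ≠ 0 := by
    intro q hq0 hqτ
    obtain ⟨α, ha, hb⟩ : ∃ α, max (q : ℝ) 1 < α ∧ α < min (s - 1) 2 := by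
      apply exists_between
      refine max_lt (lt_min ?_ ?_) (lt_min ?_ ?_) <;> linarith
    rw [max_lt_iff] at ha
    rw [lt_min_iff] at hb
    refine main_sigma hA hq0 ha.1 ha.2 hb.2.le ?_
    intro h0
    have h1 := null_of_null (by linarith) h0
    have h3 : hDimK A ≤ α + 1 := csInf_le ⟨0, fun x hx => hx.1⟩ ⟨by linarith, h1⟩
    linarith
  have hall : ∀ᵐ θ ∂(volume.restrict (Set.Ico (0 : ℝ) π)), ∀ q : ℚ, 0 < (q : ℝ) → (q : ℝ) < τ →
      ∀ σ' ≤ (q : ℝ), hMeasK σ' (PVperp θ '' A) ≠ 0 := by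
    rw [ae_all_iff]
    intro q
    by_cases hq0 : 0 < (q : ℝ)
    · by_cases hqτ : (q : ℝ) < τ
      · filter_upwards [hq q hq0 hqτ] with θ hθ _ _
        exact hθ
      · exact ae_of_all _ fun θ _ h => absurd h hqτ
    · exact ae_of_all _ fun θ h => absurd h hq0
  filter_upwards [hall] with θ hθ
  unfold hDimK
  refine le_csInf ⟨4 + 1, by norm_num, null_of_null (by norm_num) (measure_mono_null (Set.subset_univ _) univ_null)⟩ ?_
  rintro b ⟨hb0, hb⟩
  by_contra hlt
  push Not at hlt
  obtain ⟨q, q1, q2⟩ := exists_rat_btwn hlt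
  exact hθ q (by linarith) q2 b q1.le hb

end HD
end PartD3

/-- Main theorem: a.e. lower bound for the Hausdorff dimension of vertical
projections of an analytic set A ⊆ ℍ with dim A = s ∈ (2,4]. -/
theorem stmt_19 (A : Set Heis) (hA : MeasureTheory.AnalyticSet A)
    (s : ℝ) (hdim : hDimK A = s) (h2 : 2 < s) (h4 : s ≤ 4) :
    ∀ᵐ θ ∂(volume.restrict (Set.Ico (0 : ℝ) Real.pi)),
      (s ≤ 5 / 2 → s / 2 ≤ hDimK (PVperp θ '' A)) ∧
      (5 / 2 < s → s * (s + 2) / (4 * s - 1) ≤ hDimK (PVperp θ '' A)) := by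
  by_cases hs : s ≤ 5 / 2
  · filter_upwards [HD.main_tau hA hdim h2 (τ := s / 2) (by linarith) (by linarith) (by linarith)] with θ hθ
    exact ⟨fun _ => hθ, fun h => absurd hs (not_le.2 h)⟩
  · push Not at hs
    have hp : 0 < 4 * s - 1 := by linarith
    filter_upwards [HD.main_tau hA hdim h2 (τ := s * (s + 2) / (4 * s - 1)) (by positivity)
      (by rw [div_le_iff₀ hp]; nlinarith) (by rw [div_le_iff₀ hp]; nlinarith)] with θ hθ
    exact ⟨fun h => absurd h (not_le.2 hs), fun _ => hθ⟩
end
end
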